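/- arXiv:2212.14265 — 3 statements merged into one kernel-verified Lean document; each statement's English description precedes it below -/
import Mathlib

section
/- Let n ≥ 2k+1. Every (k+1)-crossing-free set F of pairs of {1,…,n} with exactly k(2n−2k−1) − 2 elements is contained in at most five k-triangulations of the n-gon. (Equivalently, all links of dimension one in the multiassociahedron are cycles of length at most five.) -/
open scoped BigOperators

/-- A pair `{i,j}` of distinct vertices of the `n`-gon.  Vertices `1,…,n` are represented by
`Fin n` (vertex `i` corresponds to `i-1 : Fin n`), and a pair is recorded with its endpoints
in increasing order. -/
abbrev Pair (n : ℕ) := {p : Fin n × Fin n // p.1 < p.2}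

/-- Two pairs `{i,j}` (`i<j`) and `{k,l}` (`k<l`) cross if `i<k<j<l` or `k<i<l<j`. -/
def Cross {n : ℕ} (e f : Pair n) : Prop :=
  (e.val.1 < f.val.1 ∧ f.val.1 < e.val.2 ∧ e.val.2 < f.val.2) ∨
  (f.val.1 < e.val.1 ∧ e.val.1 < f.val.2 ∧ f.val.2 < e.val.2)

/-- A set of pairs is `(k+1)`-crossing-free if it contains no `k+1` pairwise crossing pairs. -/
def CrossingFree (n k : ℕ) (S : Set (Pair n)) : Prop :=
  ¬ ∃ C : Finset (Pair n), ↑C ⊆ S ∧ C.card = k + 1 ∧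
      ∀ e ∈ C, ∀ f ∈ C, e ≠ f → Cross e f

/-- A `k`-triangulation of the `n`-gon: an inclusion-maximal `(k+1)`-crossing-free set. -/
def IsTriangulation (n k : ℕ) (T : Set (Pair n)) : Prop :=
  CrossingFree n k T ∧ ∀ S : Set (Pair n), CrossingFree n k S → T ⊆ S → S = T

/-- The length of a pair `{i,j}` with respect to the `N`-gon: `min (j-i) (N-(j-i))`. -/
def pairLen (N : ℕ) {n : ℕ} (e : Pair n) : ℕ :=
  min ((e.val.2 : ℕ) - (e.val.1 : ℕ)) (N - ((e.val.2 : ℕ) - (e.val.1 : ℕ)))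

/-- A pair is `k`-relevant in the `N`-gon if its length is at least `k+1`. -/
def Relevant (N k : ℕ) {n : ℕ} (e : Pair n) : Prop := k + 1 ≤ pairLen N e

/-- The 2×2 determinant `det (u v)` of two plane vectors. -/
def det2 (u v : ℝ × ℝ) : ℝ := u.1 * v.2 - u.2 * v.1

/-- Points in convex position, listed in counterclockwise order along their convex hull:
they are distinct and every triple `i<j<k` is positively oriented. -/
def ConvexPosition {n : ℕ} (q : Fin n → ℝ × ℝ) : Prop :=
  Function.Injective q ∧
  ∀ i j k : Fin n, i < j → j < k → 0 < det2 (q j - q i) (q k - q i)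

/-- `p` lies on the line through `a` and `b`. -/
def onLine (a b p : ℝ × ℝ) : Prop := det2 (b - a) (p - a) = 0

/-- Row of the bar-and-joint rigidity matrix `R(p)` indexed by the pair `e`:
`p_i - p_j` in block `i`, `p_j - p_i` in block `j`, zeros elsewhere. -/
def bjRow {n d : ℕ} (p : Fin n → Fin d → ℝ) (e : Pair n) : Fin n × Fin d → ℝ :=
  fun ma =>
    if ma.1 = e.val.1 then p e.val.1 ma.2 - p e.val.2 ma.2
    else if ma.1 = e.val.2 then p e.val.2 ma.2 - p e.val.1 ma.2
    else 0

/-- Row of the hyperconnectivity matrix `H(p)` indexed by the pair `e`: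
`p_j` in block `i`, `-p_i` in block `j`, zeros elsewhere. -/
def hypRow {n d : ℕ} (p : Fin n → Fin d → ℝ) (e : Pair n) : Fin n × Fin d → ℝ :=
  fun ma =>
    if ma.1 = e.val.1 then p e.val.2 ma.2
    else if ma.1 = e.val.2 then - p e.val.1 ma.2
    else 0

/-- The vector `c_{ij} = ((x_i-x_j)^{d-1}, (x_i-x_j)^{d-2}(y_i-y_j), …, (y_i-y_j)^{d-1})`. -/
def cvec (d : ℕ) (qi qj : ℝ × ℝ) : Fin d → ℝ :=
  fun a => (qi.1 - qj.1) ^ (d - 1 - (a : ℕ)) * (qi.2 - qj.2) ^ (a : ℕ)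

/-- Row of the cofactor rigidity matrix `C_d(q)` indexed by the pair `e`:
`c_{ij}` in block `i`, `-c_{ij}` in block `j`, zeros elsewhere. -/
def cofRow (d : ℕ) {n : ℕ} (q : Fin n → ℝ × ℝ) (e : Pair n) : Fin n × Fin d → ℝ :=
  fun ma =>
    if ma.1 = e.val.1 then cvec d (q e.val.1) (q e.val.2) ma.2
    else if ma.1 = e.val.2 then - cvec d (q e.val.1) (q e.val.2) ma.2
    else 0

/-- `x_{ij} = X_i Z_j - Z_i X_j` for vectors in `ℝ³`. -/
def xQ (Qi Qj : ℝ × ℝ × ℝ) : ℝ := Qi.1 * Qj.2.2 - Qi.2.2 * Qj.1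

/-- `y_{ij} = Y_i Z_j - Z_i Y_j` for vectors in `ℝ³`. -/
def yQ (Qi Qj : ℝ × ℝ × ℝ) : ℝ := Qi.2.1 * Qj.2.2 - Qi.2.2 * Qj.2.1

/-- The vector `c_{ij} = (x_{ij}^{d-1}, x_{ij}^{d-2} y_{ij}, …, y_{ij}^{d-1})`. -/
def gcvec (d : ℕ) (Qi Qj : ℝ × ℝ × ℝ) : Fin d → ℝ :=
  fun a => (xQ Qi Qj) ^ (d - 1 - (a : ℕ)) * (yQ Qi Qj) ^ (a : ℕ)

/-- Row of the generalized cofactor rigidity matrix `C_d(Q)` for vectors in `ℝ³`. -/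
def gcofRow (d : ℕ) {n : ℕ} (Q : Fin n → ℝ × ℝ × ℝ) (e : Pair n) : Fin n × Fin d → ℝ :=
  fun ma =>
    if ma.1 = e.val.1 then gcvec d (Q e.val.1) (Q e.val.2) ma.2
    else if ma.1 = e.val.2 then - gcvec d (Q e.val.1) (Q e.val.2) ma.2
    else 0

/-- The cone of all nonnegative linear combinations of `{v e : e ∈ S}`. -/
def coneOf {n : ℕ} {V : Type*} [AddCommGroup V] [Module ℝ V]
    (v : Pair n → V) (S : Set (Pair n)) : Set V :=
  {x | ∃ c : Pair n → ℝ, (∀ e, 0 ≤ c e) ∧ (∀ e, c e ≠ 0 → e ∈ S) ∧ x = ∑ e, c e • v e}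

/-- The vectors `(v e)` realize the `k`-associahedron of the `n`-gon as a complete
simplicial fan: (a) the vectors of every `k`-triangulation are linearly independent;
(b) cones of two `k`-triangulations intersect in the cone of their intersection;
(c) the union of all the cones is the linear span of all the vectors. -/
def RealizesFan (n k : ℕ) {V : Type*} [AddCommGroup V] [Module ℝ V]
    (v : Pair n → V) : Prop :=
  (∀ T : Set (Pair n), IsTriangulation n k T →
      LinearIndependent ℝ (fun e : T => v e.val)) ∧
  (∀ T T' : Set (Pair n), IsTriangulation n k T → IsTriangulation n k T' →
      coneOf v T ∩ coneOf v T' = coneOf v (T ∩ T')) ∧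
  (⋃ T ∈ {T : Set (Pair n) | IsTriangulation n k T}, coneOf v T) =
    (Submodule.span ℝ (Set.range v) : Set V)

/-!
Read the pairs `{a, b}` lexicographically, each contributing the simple transposition of
`b - a - 1` and `b - a`. For a set `T` of pairs, a growth diagram shows that the Demazure product
of the pairs missing from `T` records the largest number of pairwise crossing pairs of `T`. Hence
`T` is a `k`-triangulation only if the pairs missing from it form a reduced word, and this word
always represents the same permutation, namely the reversal of `[k, n - k)`. In particular the
sets `T \ F`, for `k`-triangulations `T` containing `F`, are facets of a subword complex, and they
have two elements.

Fix such a facet `{a, b}` and attach to every position the reflection given by its root. Comparing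
two reduced words for the same permutation yields a relation between the reflections at the
positions where they differ, and this forces the reflection at a vertex of another facet to be one
of the at most three transpositions in the group generated by the reflections at `a` and `b`.
Distinct letters of a reduced word have distinct reflections, so there are at most `2 + 3` vertices.
By the same comparison each of them lies in at most two facets.
-/

open Equiv

section Transpositions

/-- The transpositions of the group generated by two distinct transpositions `s₁` and `s₂`:
three of them if these overlap, and two if they are disjoint. -/
def swapTriple {α : Type*} (s₁ s₂ : Perm α) : Set (Perm α) := {s₁, s₂, s₁ * s₂ * s₁}

lemma finite_swapTriple {α : Type*} {s₁ s₂ : Perm α} : (swapTriple s₁ s₂).Finite :=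
  ((Set.finite_singleton _).insert _).insert _

lemma ncard_swapTriple_le {α : Type*} {s₁ s₂ : Perm α} : (swapTriple s₁ s₂).ncard ≤ 3 := by
  have hpair := Set.ncard_insert_le s₂ {s₁ * s₂ * s₁}
  rw [Set.ncard_singleton] at hpair
  exact (Set.ncard_insert_le _ _).trans (Nat.succ_le_succ hpair)

variable {α : Type*} [DecidableEq α] {s₁ s₂ s₃ s₄ : Perm α}

lemma isSwap_mul_self (h : s₁.IsSwap) : s₁ * s₁ = 1 := by
  obtain ⟨x, y, -, rfl⟩ := h
  exact swap_mul_self x y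

lemma isSwap_inv (h : s₁.IsSwap) : s₁⁻¹ = s₁ :=
  inv_eq_of_mul_eq_one_left (isSwap_mul_self h)

lemma isSwap_conj (h₁ : s₁.IsSwap) (h₂ : s₂.IsSwap) : (s₁ * s₂ * s₁).IsSwap := by
  obtain ⟨x, y, hxy, rfl⟩ := h₂
  refine ⟨s₁ x, s₁ y, s₁.injective.ne hxy, ?_⟩
  rw [swap_apply_apply, isSwap_inv h₁]

lemma swap_eq_swap_iff_of_ne {x y u v : α} (hxy : x ≠ y) :
    swap x y = swap u v ↔ (x = u ∧ y = v) ∨ (x = v ∧ y = u) := by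
  constructor
  · intro h
    have hy : y = swap u v x := by rw [← h, swap_apply_left]
    grind
  · rintro (⟨rfl, rfl⟩ | ⟨rfl, rfl⟩)
    · rfl
    · exact swap_comm x y

lemma conj_mem_swapTriple_iff (h : s₁.IsSwap) :
    s₁ * s₃ * s₁ ∈ swapTriple s₁ s₂ ↔ s₃ ∈ swapTriple s₁ s₂ := by
  have hs : s₁⁻¹ = s₁ := isSwap_inv h
  have h₁ : s₁ * s₃ * s₁ = s₁ ↔ s₃ = s₁ := by
    rw [mul_eq_right, mul_eq_one_iff_inv_eq, hs, eq_comm]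
  have h₂ : s₁ * s₃ * s₁ = s₂ ↔ s₃ = s₁ * s₂ * s₁ := by
    rw [← eq_mul_inv_iff_mul_eq, ← eq_inv_mul_iff_mul_eq, hs, mul_assoc]
  have h₃ : s₁ * s₃ * s₁ = s₁ * s₂ * s₁ ↔ s₃ = s₂ := by
    rw [mul_left_inj, mul_right_inj]
  simp only [swapTriple, Set.mem_insert_iff, Set.mem_singleton_iff, h₁, h₂, h₃]
  tauto

lemma eq_swap_of_apply_eq {x y : α} (h : s₁.IsSwap) (hxy : x ≠ y) (hx : s₁ x = y) :
    s₁ = swap x y := by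
  obtain ⟨u, v, -, rfl⟩ := h
  grind [swap_comm]

lemma apply_ne_of_isSwap_swap_mul {σ : Perm α} {x y : α} (hxy : x ≠ y) (hσ : σ ≠ 1)
    (h : (swap x y * σ).IsSwap) : σ x ≠ x := by
  intro hx
  have happly : (swap x y * σ) x = y := by rw [Perm.mul_apply, hx, swap_apply_left]
  exact hσ (mul_eq_left.mp (eq_swap_of_apply_eq h hxy happly))

lemma isSwap_disjoint_or_exists_eq_swap (h₁ : s₁.IsSwap) (h₂ : s₂.IsSwap) (hne : s₁ ≠ s₂) :
    s₁.Disjoint s₂ ∨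
      ∃ a b c, a ≠ c ∧ b ≠ c ∧ s₁ = swap a b ∧ s₂ = swap a c := by
  obtain ⟨a, b, -, rfl⟩ := h₁
  obtain ⟨c, d, hcd, rfl⟩ := h₂
  by_cases hac : a = c
  · exact .inr ⟨a, b, d, by grind, by grind, rfl, by rw [hac]⟩
  by_cases had : a = d
  · exact .inr ⟨a, b, c, hac, by grind [swap_comm], rfl, by rw [had, swap_comm]⟩
  by_cases hbc : b = c
  · exact .inr ⟨b, a, d, by grind, had, swap_comm a b, by rw [hbc]⟩
  by_cases hbd : b = d
  · exact .inr ⟨b, a, c, hbc, hac, swap_comm a b, by rw [hbd, swap_comm]⟩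
  · exact .inl fun z ↦ by grind

lemma swap_mem_swapTriple_of_overlap {a b c x y : α} (hac : a ≠ c) (hbc : b ≠ c)
    (hxy : x ≠ y) (hx : (swap a b * swap a c) x ≠ x) (hy : (swap a b * swap a c) y ≠ y) :
    swap x y ∈ swapTriple (swap a b) (swap a c) := by
  have hconj : swap a b * swap a c * swap a b = swap b c := by
    rw [swap_comm a c, swap_mul_swap_mul_swap hac.symm hbc.symm]
  have mem_of_moved : ∀ z, (swap a b * swap a c) z ≠ z → z = a ∨ z = b ∨ z = c := by
    intro z hz
    rw [Perm.mul_apply] at hz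
    grind
  have hx' := mem_of_moved x hx
  have hy' := mem_of_moved y hy
  rw [swapTriple, hconj]
  grind [swap_comm]

lemma swap_mem_swapTriple_of_disjoint {x y : α} (h₁ : s₁.IsSwap) (h₂ : s₂.IsSwap)
    (hdisj : s₁.Disjoint s₂) (hxy : x ≠ y) (hx : (s₁ * s₂) x ≠ x)
    (h : (swap x y * (s₁ * s₂)).IsSwap) : swap x y ∈ swapTriple s₁ s₂ := by
  have hcomm : (s₁ * s₂) * swap x y = swap x y * (s₁ * s₂) := by
    have hinv := isSwap_inv h
    rwa [mul_inv_rev, mul_inv_rev, isSwap_inv h₁, isSwap_inv h₂, swap_inv,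
      ← hdisj.commute.eq] at hinv
  have hσx : (s₁ * s₂) x = y := by
    by_contra hne
    have hfix : (s₁ * s₂) y = (s₁ * s₂) x := by
      have happly : (s₁ * s₂ * swap x y) x = (swap x y * (s₁ * s₂)) x := by rw [hcomm]
      rwa [Perm.mul_apply, swap_apply_left, Perm.mul_apply (swap x y),
        swap_apply_of_ne_of_ne hx hne] at happly
    exact hxy ((s₁ * s₂).injective hfix).symm
  rcases hdisj x with hs₁ | hs₂
  · have hs₂ : s₂ x = y := by rwa [hdisj.commute.eq, Perm.mul_apply, hs₁] at hσx
    exact .inr (.inl (eq_swap_of_apply_eq h₂ hxy hs₂).symm)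
  · have hs₁ : s₁ x = y := by rwa [Perm.mul_apply, hs₂] at hσx
    exact .inl (eq_swap_of_apply_eq h₁ hxy hs₁).symm

lemma left_mem_swapTriple (h₁ : s₁.IsSwap) (h₂ : s₂.IsSwap) (h₃ : s₃.IsSwap) (h₄ : s₄.IsSwap)
    (hne : s₁ ≠ s₂) (h : s₁ * s₂ = s₃ * s₄) : s₃ ∈ swapTriple s₁ s₂ := by
  have hprod : (s₃ * (s₁ * s₂)).IsSwap := by
    rwa [h, ← mul_assoc, isSwap_mul_self h₃, one_mul]
  have hone : s₁ * s₂ ≠ 1 := by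
    rwa [Ne, mul_eq_one_iff_eq_inv, isSwap_inv h₂]
  obtain ⟨x, y, hxy, rfl⟩ := h₃
  have hx := apply_ne_of_isSwap_swap_mul hxy hone hprod
  have hy := apply_ne_of_isSwap_swap_mul hxy.symm hone (swap_comm x y ▸ hprod)
  rcases isSwap_disjoint_or_exists_eq_swap h₁ h₂ hne with
    hdisj | ⟨a, b, c, hac, hbc, rfl, rfl⟩
  · exact swap_mem_swapTriple_of_disjoint h₁ h₂ hdisj hxy hx hprod
  · exact swap_mem_swapTriple_of_overlap hac hbc hxy hx hy

lemma right_mem_swapTriple (h₁ : s₁.IsSwap) (h₂ : s₂.IsSwap) (h₃ : s₃.IsSwap) (h₄ : s₄.IsSwap)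
    (hne : s₁ ≠ s₂) (h : s₁ * s₂ = s₃ * s₄) : s₄ ∈ swapTriple s₁ s₂ := by
  refine left_mem_swapTriple h₁ h₂ h₄ (isSwap_conj h₄ h₃) hne ?_
  rw [h, ← mul_assoc, ← mul_assoc, isSwap_mul_self h₄, one_mul]

lemma mem_swapTriple_of_mul_eq_mul (h₁ : s₁.IsSwap) (h₂ : s₂.IsSwap) (h₃ : s₃.IsSwap)
    (h₄ : s₄.IsSwap) (hne : s₃ ≠ s₄) (h : s₁ * s₂ = s₃ * s₄) :
    s₃ ∈ swapTriple s₁ s₂ ∧ s₄ ∈ swapTriple s₁ s₂ := by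
  have hne' : s₁ ≠ s₂ := by
    rintro rfl
    rw [isSwap_mul_self h₁, eq_comm, mul_eq_one_iff_eq_inv, isSwap_inv h₄] at h
    exact hne h
  exact ⟨left_mem_swapTriple h₁ h₂ h₃ h₄ hne' h, right_mem_swapTriple h₁ h₂ h₃ h₄ hne' h⟩

lemma mem_swapTriple_of_interlaced_mul_eq_one (h₁ : s₁.IsSwap) (h₂ : s₂.IsSwap)
    (h₃ : s₃.IsSwap) (h₄ : s₄.IsSwap) (hne : s₁ ≠ s₂) (h : s₁ * s₃ * (s₂ * s₄) = 1) :
    s₃ ∈ swapTriple s₁ s₂ ∧ s₄ ∈ swapTriple s₁ s₂ := by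
  have heq : s₁ * s₂ = s₁ * s₃ * s₁ * s₄ := by
    have hs₂ : s₂ = s₃ * s₁ * s₄ := by
      rw [← mul_inv_eq_iff_eq_mul, isSwap_inv h₄, mul_eq_one_iff_inv_eq.mp h |>.symm,
        mul_inv_rev, isSwap_inv h₃, isSwap_inv h₁]
    rw [hs₂, mul_assoc, mul_assoc, mul_assoc]
  exact ⟨(conj_mem_swapTriple_iff h₁).mp (left_mem_swapTriple h₁ h₂ (isSwap_conj h₁ h₃) h₄ hne heq),
    right_mem_swapTriple h₁ h₂ (isSwap_conj h₁ h₃) h₄ hne heq⟩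

lemma exists_eq_swap_of_conj_ne {x y : α} (h : s₁.IsSwap)
    (hne : swap x y * s₁ * swap x y ≠ s₁) :
    ∃ z, z ≠ x ∧ z ≠ y ∧
      (s₁ = swap x z ∧ swap x y * s₁ * swap x y = swap y z ∨
        s₁ = swap y z ∧ swap x y * s₁ * swap x y = swap x z) := by
  obtain ⟨l, m, hlm, rfl⟩ := h
  have hconj : swap x y * swap l m * swap x y = swap (swap x y l) (swap x y m) := by
    rw [swap_apply_apply, swap_inv]
  rw [hconj] at hne ⊢
  by_cases hl : l = x ∨ l = y
  · refine ⟨m, ?_⟩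
    grind [swap_comm]
  · refine ⟨l, ?_⟩
    grind [swap_comm]

end Transpositions

namespace Subword

section Words

variable {q : ℕ → ℕ} {X Y : Finset ℕ} {N a b c d s t u v x y z : ℕ}

/-- The product, in increasing order, of the simple transpositions `swap (q s) (q s + 1)` over
the positions `s < t` lying in `X`. Here `q` is a word in the simple transpositions of `ℕ`, the
letter `m` standing for `swap m (m + 1)`, and `X` is a subword given by its positions. -/
def prefixProd (q : ℕ → ℕ) (X : Finset ℕ) : ℕ → Perm ℕ
  | 0 => 1
  | t + 1 => if t ∈ X then prefixProd q X t * swap (q t) (q t + 1) else prefixProd q X t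

/-- The root of the subword `X` at position `t`, recorded as the transposition it defines. -/
def reflection (q : ℕ → ℕ) (X : Finset ℕ) (t : ℕ) : Perm ℕ :=
  swap (prefixProd q X t (q t)) (prefixProd q X t (q t + 1))

/-- In the one-line notation of `prefixProd q X t`, the value `x` stands to the left of `y`. -/
def Precedes (q : ℕ → ℕ) (X : Finset ℕ) (t x y : ℕ) : Prop :=
  (prefixProd q X t).symm x < (prefixProd q X t).symm y

/-- The subword `X` of `q` is a reduced word: each of its letters increases the number of
inversions of the prefix product. -/
def IsReduced (q : ℕ → ℕ) (X : Finset ℕ) : Prop :=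
  ∀ t ∈ X, prefixProd q X t (q t) < prefixProd q X t (q t + 1)

lemma reflection_eq_conj :
    reflection q X t = prefixProd q X t * swap (q t) (q t + 1) * (prefixProd q X t)⁻¹ := by
  rw [reflection, swap_apply_apply]

lemma isSwap_reflection : (reflection q X t).IsSwap :=
  ⟨_, _, (prefixProd q X t).injective.ne (Nat.ne_add_one (q t)), rfl⟩

lemma reflection_eq_swap_iff :
    reflection q X t = swap x y ↔
      ((prefixProd q X t).symm x = q t ∧ (prefixProd q X t).symm y = q t + 1) ∨
        ((prefixProd q X t).symm y = q t ∧ (prefixProd q X t).symm x = q t + 1) := by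
  rw [reflection, swap_eq_swap_iff_of_ne ((prefixProd q X t).injective.ne (Nat.ne_add_one (q t)))]
  simp only [symm_apply_eq, @eq_comm ℕ x, @eq_comm ℕ y]

lemma prefixProd_succ_symm_apply :
    (prefixProd q X (t + 1)).symm x =
      if t ∈ X then swap (q t) (q t + 1) ((prefixProd q X t).symm x)
      else (prefixProd q X t).symm x := by
  rw [prefixProd]
  split_ifs <;> rfl

lemma swap_succ_lt_swap_succ_iff {m : ℕ} (h : ¬(u = m ∧ v = m + 1)) (h' : ¬(v = m ∧ u = m + 1)) :
    swap m (m + 1) u < swap m (m + 1) v ↔ u < v := by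
  grind

lemma precedes_succ_iff (h : ¬(t ∈ X ∧ reflection q X t = swap x y)) :
    Precedes q X (t + 1) x y ↔ Precedes q X t x y := by
  simp only [Precedes, prefixProd_succ_symm_apply]
  split_ifs with ht
  · have hne := mt reflection_eq_swap_iff.mpr (not_and.mp h ht)
    exact swap_succ_lt_swap_succ_iff (fun h ↦ hne (.inl h)) (fun h ↦ hne (.inr h))
  · rfl

lemma precedes_succ_iff_not (ht : t ∈ X) (h : reflection q X t = swap x y) :
    Precedes q X (t + 1) x y ↔ ¬Precedes q X t x y := by
  simp only [Precedes, prefixProd_succ_symm_apply, if_pos ht]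
  rcases reflection_eq_swap_iff.mp h with ⟨hx, hy⟩ | ⟨hy, hx⟩ <;> simp [hx, hy]

lemma precedes_iff_of_forall_ne (hst : s ≤ t)
    (h : ∀ p ∈ Finset.Ico s t, p ∈ X → reflection q X p ≠ swap x y) :
    Precedes q X t x y ↔ Precedes q X s x y := by
  induction t, hst using Nat.le_induction with
  | base => rfl
  | succ t hst ih =>
    rw [precedes_succ_iff fun ⟨ht, heq⟩ ↦ h t (by simp [hst]) ht heq]
    exact ih fun p hp ↦ h p (Finset.Ico_subset_Ico_right t.le_succ hp)

lemma precedes_iff_of_reflection_eq_swap (h : reflection q X t = swap x y) (hx : z ≠ x)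
    (hy : z ≠ y) : Precedes q X t x z ↔ Precedes q X t y z := by
  have hx' := (prefixProd q X t).symm.injective.ne hx
  have hy' := (prefixProd q X t).symm.injective.ne hy
  rw [reflection_eq_swap_iff] at h
  simp only [Precedes]
  omega

lemma precedes_iff_lt_of_reflection_eq_swap (hX : IsReduced q X) (ht : t ∈ X)
    (h : reflection q X t = swap x y) : Precedes q X t x y ↔ x < y := by
  have hlt := hX t ht
  rcases reflection_eq_swap_iff.mp h with ⟨hx, hy⟩ | ⟨hy, hx⟩ <;>
    rw [Precedes, hx, hy] <;> rw [symm_apply_eq] at hx hy <;> omega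

lemma not_precedes_of_le (hX : IsReduced q X) (hxy : x < y) (hst : s ≤ t)
    (h : ¬Precedes q X s x y) : ¬Precedes q X t x y := by
  induction t, hst using Nat.le_induction with
  | base => exact h
  | succ t _ ih =>
    by_cases heq : t ∈ X ∧ reflection q X t = swap x y
    · exact absurd ((precedes_iff_lt_of_reflection_eq_swap hX heq.1 heq.2).mpr hxy) ih
    · rwa [precedes_succ_iff heq]

lemma injOn_reflection (hX : IsReduced q X) : Set.InjOn (reflection q X) X := by
  intro s hs t ht hst
  by_contra hne
  wlog hlt : s < t generalizing s t
  · exact this ht hs hst.symm (Ne.symm hne) (by omega)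
  obtain ⟨x, y, hxy, hx⟩ : ∃ x y, x < y ∧ reflection q X s = swap x y := ⟨_, _, hX s hs, rfl⟩
  have hs_prec := (precedes_iff_lt_of_reflection_eq_swap hX hs hx).mpr hxy
  have ht_prec := (precedes_iff_lt_of_reflection_eq_swap hX ht (hst ▸ hx)).mpr hxy
  have hs_succ : ¬Precedes q X (s + 1) x y := by
    rwa [precedes_succ_iff_not hs hx, not_not]
  exact not_precedes_of_le hX hxy hlt hs_succ ht_prec

lemma precedes_iff_precedes_iff_notMem_Ico (hX : IsReduced q X) {p : ℕ} (hst : s ≤ t) (hp : p ∈ X)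
    (h : reflection q X p = swap x y) :
    (Precedes q X t x y ↔ Precedes q X s x y) ↔ p ∉ Finset.Ico s t := by
  have eq_of_reflection : ∀ r ∈ X, reflection q X r = swap x y → r = p :=
    fun r hr hr' ↦ injOn_reflection hX hr hp (hr'.trans h.symm)
  by_cases hmem : p ∈ Finset.Ico s t
  · obtain ⟨hsp, hpt⟩ := Finset.mem_Ico.mp hmem
    have hafter : Precedes q X t x y ↔ Precedes q X (p + 1) x y := by
      refine precedes_iff_of_forall_ne hpt fun r hr hrX hr' ↦ ?_
      grind
    have hbefore : Precedes q X p x y ↔ Precedes q X s x y := by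
      refine precedes_iff_of_forall_ne hsp fun r hr hrX hr' ↦ ?_
      grind
    rw [hafter, precedes_succ_iff_not hp h, hbefore]
    tauto
  · have hconst := precedes_iff_of_forall_ne hst fun r hr hrX hr' ↦
      hmem (eq_of_reflection r hrX hr' ▸ hr)
    tauto

lemma mem_Ico_iff_of_reflection_eq_conj (hX : IsReduced q X) (hab : a ≤ b) (hc : c ∈ X)
    (hd : d ∈ X) (hcd : c ≠ d) (href : reflection q X a = reflection q X b)
    (hconj : reflection q X d = reflection q X a * reflection q X c * reflection q X a) :
    c ∈ Finset.Ico a b ↔ d ∈ Finset.Ico a b := by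
  obtain ⟨x, y, -, hx⟩ := isSwap_reflection (q := q) (X := X) (t := a)
  have hne : reflection q X d ≠ reflection q X c := fun h ↦ hcd (injOn_reflection hX hd hc h).symm
  rw [hconj, hx] at hne
  -- `x` and `y` are adjacent at times `a` and `b`, so between these times `z` passes both or none.
  obtain ⟨z, hzx, hzy, hz⟩ := exists_eq_swap_of_conj_ne isSwap_reflection hne
  have ha := precedes_iff_of_reflection_eq_swap hx hzx hzy
  have hb := precedes_iff_of_reflection_eq_swap (href ▸ hx) hzx hzy
  rw [← hx, ← hconj] at hz
  have ends_agree {p r : ℕ} (hp : p ∈ X) (h : reflection q X p = swap r z) :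
      (Precedes q X b r z ↔ Precedes q X a r z) ↔ p ∉ Finset.Ico a b :=
    precedes_iff_precedes_iff_notMem_Ico hX hab hp h
  rw [← not_iff_not]
  rcases hz with ⟨hcz, hdz⟩ | ⟨hcz, hdz⟩ <;>
    rw [← ends_agree hc hcz, ← ends_agree hd hdz, ha, hb]

lemma exists_mem_of_not_precedes (hX : IsReduced q X) (hxy : x < y) (h : ¬Precedes q X N x y) :
    ∃ t ∈ X, prefixProd q X t (q t) = x ∧ prefixProd q X t (q t + 1) = y := by
  by_contra! hne
  have hzero : Precedes q X 0 x y := by rwa [Precedes, prefixProd]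
  refine h ((precedes_iff_of_forall_ne N.zero_le fun t _ ht heq ↦ ?_).mpr hzero)
  have hprec := (precedes_iff_lt_of_reflection_eq_swap hX ht heq).mpr hxy
  rcases reflection_eq_swap_iff.mp heq with ⟨hx, hy⟩ | ⟨hy, hx⟩
  · rw [symm_apply_eq] at hx hy
    exact hne t ht hx.symm hy.symm
  · rw [Precedes] at hprec
    omega

lemma ncard_inversions_prefixProd (hX : IsReduced q X) (hN : X ⊆ Finset.range N) :
    {p : ℕ × ℕ | p.1 < p.2 ∧
      (prefixProd q X N).symm p.2 < (prefixProd q X N).symm p.1}.ncard = X.card := by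
  let pairAt (t : ℕ) : ℕ × ℕ := (prefixProd q X t (q t), prefixProd q X t (q t + 1))
  have hinj : Set.InjOn pairAt X := fun s hs t ht hst ↦ injOn_reflection hX hs ht <| by
    simp only [pairAt, Prod.mk.injEq] at hst
    rw [reflection, reflection, hst.1, hst.2]
  rw [← Set.ncard_coe_finset, ← hinj.ncard_image]
  congr 1
  ext ⟨x, y⟩
  constructor
  · rintro ⟨hxy, hinv⟩
    obtain ⟨t, ht, hx, hy⟩ := exists_mem_of_not_precedes hX hxy (not_lt.mpr hinv.le)
    exact ⟨t, ht, Prod.ext hx hy⟩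
  · rintro ⟨t, ht, htxy⟩
    obtain ⟨rfl, rfl⟩ := Prod.mk.inj htxy
    have hlt := hX t ht
    refine ⟨hlt, lt_of_le_of_ne (not_lt.mp ?_) ((prefixProd q X N).symm.injective.ne hlt.ne')⟩
    refine not_precedes_of_le hX hlt (Finset.mem_range.mp (hN ht)) ?_
    rw [precedes_succ_iff_not ht rfl, not_not]
    exact (precedes_iff_lt_of_reflection_eq_swap hX ht rfl).mpr hlt

lemma prefixProd_eq_prod_reflection_mul (q : ℕ → ℕ) (X Y : Finset ℕ) (t : ℕ) :
    prefixProd q Y t = (((List.range t).filter (· ∈ symmDiff X Y)).map (reflection q X)).prod *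
      prefixProd q X t := by
  induction t with
  | zero => simp [prefixProd]
  | succ t ih =>
    rw [List.range_succ, List.filter_append, List.map_append, List.prod_append]
    by_cases hX : t ∈ X <;> by_cases hY : t ∈ Y <;>
      simp [prefixProd, Finset.mem_symmDiff, hX, hY, ih, mul_assoc, reflection_eq_conj]

lemma prod_reflection_eq_one {l : List ℕ} (hl : l.Pairwise (· < ·))
    (hmem : ∀ p, p ∈ l ↔ p ∈ symmDiff X Y)
    (hX : X ⊆ Finset.range N) (hY : Y ⊆ Finset.range N)
    (h : prefixProd q X N = prefixProd q Y N) : (l.map (reflection q X)).prod = 1 := by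
  have hfilter : (List.range N).filter (· ∈ symmDiff X Y) = l := by
    refine (List.pairwise_lt_range.filter _).eq_of_mem_iff hl fun {p} ↦ ?_
    have hXp := @hX p
    have hYp := @hY p
    simp only [List.mem_filter, List.mem_range, Finset.mem_range, hmem, Finset.mem_symmDiff,
      decide_eq_true_eq] at *
    tauto
  have hprod := prefixProd_eq_prod_reflection_mul q X Y N
  rwa [hfilter, ← h, right_eq_mul] at hprod

end Words

section Facets

variable {q : ℕ → ℕ} {w : Perm ℕ} {N a b c d : ℕ} {Q A B : Finset ℕ}

lemma disjoint_pair_pair_iff {α : Type*} [DecidableEq α] {a b c d : α} :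
    Disjoint ({a, b} : Finset α) {c, d} ↔ a ≠ c ∧ a ≠ d ∧ b ≠ c ∧ b ≠ d := by
  simp only [Finset.disjoint_left, Finset.mem_insert, Finset.mem_singleton]
  grind

lemma exists_eq_pair_of_mem {α : Type*} [DecidableEq α] {A : Finset α} {a : α} (hA : A.card = 2)
    (ha : a ∈ A) : ∃ b, a ≠ b ∧ A = {a, b} := by
  obtain ⟨x, y, hxy, rfl⟩ := Finset.card_eq_two.mp hA
  rcases Finset.mem_insert.mp ha with rfl | hy
  · exact ⟨y, hxy, rfl⟩
  · rw [Finset.mem_singleton.mp hy]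
    exact ⟨x, hxy.symm, Finset.pair_comm x y⟩

/-- `A` is a facet of the subword complex of the subword `Q` of `q` and the permutation `w`: the
complement of `A` in `Q` is a reduced word for `w`. -/
structure IsFacet (q : ℕ → ℕ) (N : ℕ) (w : Perm ℕ) (Q A : Finset ℕ) : Prop where
  subset : A ⊆ Q
  isReduced : IsReduced q (Q \ A)
  prefixProd_eq : prefixProd q (Q \ A) N = w

lemma IsFacet.prod_reflection_eq_one (hQ : Q ⊆ Finset.range N) (hA : IsFacet q N w Q A)
    (hB : IsFacet q N w Q B) {l : List ℕ} (hl : l.Pairwise (· < ·))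
    (hmem : ∀ p, p ∈ l ↔ p ∈ symmDiff A B) : (l.map (reflection q (Q \ A))).prod = 1 := by
  have hsymmDiff : symmDiff (Q \ A) (Q \ B) = symmDiff A B := by
    have hAQ := hA.subset
    have hBQ := hB.subset
    ext p
    grind [Finset.mem_symmDiff]
  refine Subword.prod_reflection_eq_one hl (fun p ↦ by rw [hmem, hsymmDiff])
    (Finset.sdiff_subset.trans hQ) (Finset.sdiff_subset.trans hQ) ?_
  rw [hA.prefixProd_eq, hB.prefixProd_eq]

lemma IsFacet.reflection_eq_of_common_vertex (hQ : Q ⊆ Finset.range N) (hab : a ≠ b) (hac : a ≠ c)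
    (hbc : b ≠ c) (hB : IsFacet q N w Q {a, b}) (hC : IsFacet q N w Q {a, c}) :
    reflection q (Q \ {a, b}) c = reflection q (Q \ {a, b}) b := by
  have prod_eq_one {l : List ℕ} (hl : l.Pairwise (· < ·)) (hmem : ∀ p, p ∈ l ↔ p = b ∨ p = c) :=
    hB.prod_reflection_eq_one hQ hC hl fun p ↦ by rw [hmem]; grind [Finset.mem_symmDiff]
  rcases lt_or_gt_of_ne hbc with hlt | hlt
  · have hprod := prod_eq_one (l := [b, c]) (by simpa using hlt) (by simp)
    simp only [List.map_cons, List.map_nil, List.prod_cons, List.prod_nil, mul_one] at hprod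
    rw [mul_eq_one_iff_inv_eq.mp hprod |>.symm, isSwap_inv isSwap_reflection]
  · have hprod := prod_eq_one (l := [c, b]) (by simpa using hlt) (by simp [or_comm])
    simp only [List.map_cons, List.map_nil, List.prod_cons, List.prod_nil, mul_one] at hprod
    rw [mul_eq_one_iff_eq_inv.mp hprod, isSwap_inv isSwap_reflection]

lemma IsFacet.prod_reflection_eq_one_of_disjoint (hQ : Q ⊆ Finset.range N)
    (hdisj : Disjoint ({a, b} : Finset ℕ) {c, d})
    (hA : IsFacet q N w Q {a, b}) (hB : IsFacet q N w Q {c, d}) {l : List ℕ}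
    (hl : l.Pairwise (· < ·)) (hmem : ∀ p, p ∈ l ↔ (p = a ∨ p = b) ∨ p = c ∨ p = d) :
    (l.map (reflection q (Q \ {a, b}))).prod = 1 := by
  refine hA.prod_reflection_eq_one hQ hB hl fun p ↦ ?_
  rw [hmem, hdisj.symmDiff_eq_sup]
  simp only [Finset.sup_eq_union, Finset.mem_union, Finset.mem_insert, Finset.mem_singleton]

lemma IsFacet.mem_sdiff_of_disjoint (hdisj : Disjoint A B) (hB : IsFacet q N w Q B) (hc : c ∈ B) :
    c ∈ Q \ A :=
  Finset.mem_sdiff.mpr ⟨hB.subset hc, Finset.disjoint_right.mp hdisj hc⟩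

lemma IsFacet.reflection_mem_swapTriple_of_interlaced (hQ : Q ⊆ Finset.range N)
    (hac : a < c) (hcb : c < b) (hd : d < a ∨ b < d)
    (hA : IsFacet q N w Q {a, b}) (hB : IsFacet q N w Q {c, d}) :
    reflection q (Q \ {a, b}) c ∈
        swapTriple (reflection q (Q \ {a, b}) a) (reflection q (Q \ {a, b}) b) ∧
      reflection q (Q \ {a, b}) d ∈
        swapTriple (reflection q (Q \ {a, b}) a) (reflection q (Q \ {a, b}) b) := by
  have hdisj : Disjoint ({a, b} : Finset ℕ) {c, d} := disjoint_pair_pair_iff.mpr (by omega)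
  have hcX := hB.mem_sdiff_of_disjoint hdisj (Finset.mem_insert_self c {d})
  have hdX := hB.mem_sdiff_of_disjoint hdisj (c := d) (by simp)
  have prod_eq_one {l : List ℕ} := hA.prod_reflection_eq_one_of_disjoint hQ hdisj hB (l := l)
  have hX := hA.isReduced
  generalize Q \ {a, b} = X at *
  have hprod : reflection q X a * reflection q X c * (reflection q X b * reflection q X d) = 1 := by
    rcases hd with hda | hbd
    · have h := prod_eq_one (l := [d, a, c, b]) (by grind) (by grind)
      rw [List.map_cons, List.prod_cons, mul_eq_one_comm] at h
      simpa [mul_assoc] using h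
    · have h := prod_eq_one (l := [a, c, b, d]) (by grind) (by grind)
      simpa [mul_assoc] using h
  refine mem_swapTriple_of_interlaced_mul_eq_one isSwap_reflection isSwap_reflection
    isSwap_reflection isSwap_reflection (fun href ↦ ?_) hprod
  have hconj : reflection q X d = reflection q X a * reflection q X c * reflection q X a := by
    rw [← mul_assoc, ← href, mul_eq_one_iff_inv_eq] at hprod
    rw [← hprod, isSwap_inv (isSwap_conj isSwap_reflection isSwap_reflection)]
  have hIco := mem_Ico_iff_of_reflection_eq_conj hX (by omega) hcX hdX (by omega) href hconj
  simp only [Finset.mem_Ico] at hIco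
  omega

lemma IsFacet.reflection_mul_reflection_of_not_interlaced (hQ : Q ⊆ Finset.range N)
    (hab : a < b) (hcd : c < d) (hdisj : Disjoint ({a, b} : Finset ℕ) {c, d})
    (hIoo : a < c ∧ c < b ↔ a < d ∧ d < b)
    (hA : IsFacet q N w Q {a, b}) (hB : IsFacet q N w Q {c, d}) :
    reflection q (Q \ {a, b}) a * reflection q (Q \ {a, b}) b =
        reflection q (Q \ {a, b}) c * reflection q (Q \ {a, b}) d ∨
      reflection q (Q \ {a, b}) a * reflection q (Q \ {a, b}) b =
        reflection q (Q \ {a, b}) d * reflection q (Q \ {a, b}) c := by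
  have prod_eq_one {l : List ℕ} := hA.prod_reflection_eq_one_of_disjoint hQ hdisj hB (l := l)
  have hne := disjoint_pair_pair_iff.mp hdisj
  have hinv (t : ℕ) : (reflection q (Q \ {a, b}) t)⁻¹ = reflection q (Q \ {a, b}) t :=
    isSwap_inv isSwap_reflection
  generalize reflection q (Q \ {a, b}) = r at *
  have order : b < c ∨ d < a ∨ (c < a ∧ b < d) ∨ (a < c ∧ d < b) := by omega
  rcases order with hbc | hda | ⟨hca, hbd⟩ | ⟨hac, hdb⟩
  · have h := prod_eq_one (l := [a, b, c, d]) (by grind) (by grind)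
    have h : r a * r b * (r c * r d) = 1 := by simpa [mul_assoc] using h
    right
    rw [eq_inv_of_mul_eq_one_left h, mul_inv_rev, hinv, hinv]
  · have h := prod_eq_one (l := [c, d, a, b]) (by grind) (by grind)
    have h : r c * r d * (r a * r b) = 1 := by simpa [mul_assoc] using h
    right
    rw [eq_inv_of_mul_eq_one_right h, mul_inv_rev, hinv, hinv]
  · have h := prod_eq_one (l := [c, a, b, d]) (by grind) (by grind)
    have h : r c * (r a * r b * r d) = 1 := by simpa [mul_assoc] using h
    left
    rw [eq_mul_inv_of_mul_eq (eq_inv_of_mul_eq_one_right h), hinv, hinv]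
  · have h := prod_eq_one (l := [a, c, d, b]) (by grind) (by grind)
    have h : r a * (r c * r d * r b) = 1 := by simpa [mul_assoc] using h
    left
    rw [eq_mul_inv_of_mul_eq (eq_inv_of_mul_eq_one_right h), hinv, hinv]

lemma IsFacet.reflection_mem_swapTriple_of_not_interlaced (hQ : Q ⊆ Finset.range N)
    (hab : a < b) (hcd : c < d) (hdisj : Disjoint ({a, b} : Finset ℕ) {c, d})
    (hIoo : a < c ∧ c < b ↔ a < d ∧ d < b)
    (hA : IsFacet q N w Q {a, b}) (hB : IsFacet q N w Q {c, d}) :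
    reflection q (Q \ {a, b}) c ∈
        swapTriple (reflection q (Q \ {a, b}) a) (reflection q (Q \ {a, b}) b) ∧
      reflection q (Q \ {a, b}) d ∈
        swapTriple (reflection q (Q \ {a, b}) a) (reflection q (Q \ {a, b}) b) := by
  have hcX := hB.mem_sdiff_of_disjoint hdisj (Finset.mem_insert_self c {d})
  have hdX := hB.mem_sdiff_of_disjoint hdisj (c := d) (by simp)
  have href : reflection q (Q \ {a, b}) c ≠ reflection q (Q \ {a, b}) d :=
    fun h ↦ hcd.ne (injOn_reflection hA.isReduced hcX hdX h)
  rcases hA.reflection_mul_reflection_of_not_interlaced hQ hab hcd hdisj hIoo hB with h | h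
  · exact mem_swapTriple_of_mul_eq_mul isSwap_reflection isSwap_reflection isSwap_reflection
      isSwap_reflection href h
  · exact (mem_swapTriple_of_mul_eq_mul isSwap_reflection isSwap_reflection isSwap_reflection
      isSwap_reflection href.symm h).symm

lemma IsFacet.reflection_mem_swapTriple (hQ : Q ⊆ Finset.range N) (hab : a < b)
    (hA : IsFacet q N w Q {a, b}) (hB : IsFacet q N w Q B) (hcard : B.card = 2) (hc : c ∈ B)
    (hcA : c ∉ ({a, b} : Finset ℕ)) :
    reflection q (Q \ {a, b}) c ∈
      swapTriple (reflection q (Q \ {a, b}) a) (reflection q (Q \ {a, b}) b) := by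
  obtain ⟨d, hcd, rfl⟩ := exists_eq_pair_of_mem hcard hc
  obtain ⟨hca, hcb⟩ : c ≠ a ∧ c ≠ b := by simpa using hcA
  have hB' : IsFacet q N w Q {d, c} := Finset.pair_comm c d ▸ hB
  by_cases hda : d = a
  · subst d
    exact .inr (.inl (hA.reflection_eq_of_common_vertex hQ hab.ne hca.symm hcb.symm hB'))
  by_cases hdb : d = b
  · subst d
    rw [Finset.pair_comm a b] at hA ⊢
    exact .inl (hA.reflection_eq_of_common_vertex hQ hab.ne' hcb.symm hca.symm hB')
  have hdisj : Disjoint ({a, b} : Finset ℕ) {c, d} := disjoint_pair_pair_iff.mpr (by omega)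
  by_cases hIoo : a < c ∧ c < b ↔ a < d ∧ d < b
  · rcases lt_or_gt_of_ne hcd with hlt | hlt
    · exact (hA.reflection_mem_swapTriple_of_not_interlaced hQ hab hlt hdisj hIoo hB).1
    · rw [Finset.pair_comm c d] at hdisj
      exact (hA.reflection_mem_swapTriple_of_not_interlaced hQ hab hlt hdisj hIoo.symm hB').2
  · by_cases hc_Ioo : a < c ∧ c < b
    · exact (hA.reflection_mem_swapTriple_of_interlaced hQ hc_Ioo.1 hc_Ioo.2 (by omega) hB).1
    · have hd_Ioo : a < d ∧ d < b := by tauto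
      exact (hA.reflection_mem_swapTriple_of_interlaced hQ hd_Ioo.1 hd_Ioo.2 (by omega) hB').2

lemma card_facets_mem_le_two (hQ : Q ⊆ Finset.range N) {𝓕 : Finset (Finset ℕ)}
    (h𝓕 : ∀ A ∈ 𝓕, A.card = 2 ∧ IsFacet q N w Q A) (v : ℕ) : {A ∈ 𝓕 | v ∈ A}.card ≤ 2 := by
  by_contra! hlt
  obtain ⟨A, hA, B, hB, C, hC, hAB, hAC, hBC⟩ := Finset.two_lt_card.mp hlt
  rw [Finset.mem_filter] at hA hB hC
  obtain ⟨a, hva, rfl⟩ := exists_eq_pair_of_mem (h𝓕 A hA.1).1 hA.2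
  obtain ⟨b, hvb, rfl⟩ := exists_eq_pair_of_mem (h𝓕 B hB.1).1 hB.2
  obtain ⟨c, hvc, rfl⟩ := exists_eq_pair_of_mem (h𝓕 C hC.1).1 hC.2
  have hab : a ≠ b := by rintro rfl; exact hAB rfl
  have hac : a ≠ c := by rintro rfl; exact hAC rfl
  have hbc : b ≠ c := by rintro rfl; exact hBC rfl
  have hA := (h𝓕 _ hA.1).2
  have hB := (h𝓕 _ hB.1).2
  have hC := (h𝓕 _ hC.1).2
  have href : reflection q (Q \ {v, a}) b = reflection q (Q \ {v, a}) c :=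
    (hA.reflection_eq_of_common_vertex hQ hva hvb hab hB).trans
      (hA.reflection_eq_of_common_vertex hQ hva hvc hac hC).symm
  refine hbc (injOn_reflection hA.isReduced ?_ ?_ href)
  · simpa [hvb.symm, hab.symm] using hB.subset (x := b) (by simp)
  · simpa [hvc.symm, hac.symm] using hC.subset (x := c) (by simp)

lemma card_vertices_le_five (hQ : Q ⊆ Finset.range N) {𝓕 : Finset (Finset ℕ)}
    (h𝓕 : ∀ A ∈ 𝓕, A.card = 2 ∧ IsFacet q N w Q A) : (𝓕.biUnion id).card ≤ 5 := by
  rcases 𝓕.eq_empty_or_nonempty with rfl | ⟨A, hA⟩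
  · simp
  obtain ⟨a, b, hab, rfl⟩ : ∃ a b, a < b ∧ A = {a, b} := by
    obtain ⟨a, b, hne, rfl⟩ := Finset.card_eq_two.mp (h𝓕 A hA).1
    rcases lt_or_gt_of_ne hne with hab | hba
    · exact ⟨a, b, hab, rfl⟩
    · exact ⟨b, a, hba, Finset.pair_comm a b⟩
  have hA := (h𝓕 _ hA).2
  have exists_facet : ∀ c ∈ 𝓕.biUnion id \ {a, b},
      c ∉ ({a, b} : Finset ℕ) ∧ ∃ B ∈ 𝓕, c ∈ B := by
    intro c hc
    simpa [and_comm] using hc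
  have hmaps : ∀ c ∈ 𝓕.biUnion id \ {a, b}, reflection q (Q \ {a, b}) c ∈
      swapTriple (reflection q (Q \ {a, b}) a) (reflection q (Q \ {a, b}) b) := by
    intro c hc
    obtain ⟨hcA, B, hB, hcB⟩ := exists_facet c hc
    exact hA.reflection_mem_swapTriple hQ hab (h𝓕 B hB).2 (h𝓕 B hB).1 hcB hcA
  have hsub : 𝓕.biUnion id \ {a, b} ⊆ Q \ {a, b} := by
    intro c hc
    obtain ⟨hcA, B, hB, hcB⟩ := exists_facet c hc
    exact Finset.mem_sdiff.mpr ⟨(h𝓕 B hB).2.subset hcB, hcA⟩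
  have hother : (𝓕.biUnion id \ {a, b}).card ≤ 3 := by
    rw [← Set.ncard_coe_finset]
    exact (Set.ncard_le_ncard_of_injOn _ hmaps
      ((injOn_reflection hA.isReduced).mono hsub) finite_swapTriple).trans ncard_swapTriple_le
  calc (𝓕.biUnion id).card ≤ (𝓕.biUnion id \ {a, b}).card + ({a, b} : Finset ℕ).card := by
        have := Finset.le_card_sdiff {a, b} (𝓕.biUnion id)
        omega
    _ ≤ 3 + 2 := Nat.add_le_add hother Finset.card_le_two

theorem card_facets_le_five (hQ : Q ⊆ Finset.range N) {𝓕 : Finset (Finset ℕ)}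
    (h𝓕 : ∀ A ∈ 𝓕, A.card = 2 ∧ IsFacet q N w Q A) : 𝓕.card ≤ 5 := by
  have hdouble : ∑ A ∈ 𝓕, (𝓕.biUnion id ∩ A).card ≤ (𝓕.biUnion id).card * 2 :=
    Finset.sum_card_inter_le fun v _ ↦ card_facets_mem_le_two hQ h𝓕 v
  have hsum : ∑ A ∈ 𝓕, (𝓕.biUnion id ∩ A).card = 𝓕.card * 2 := by
    refine Finset.sum_const_nat fun A hA ↦ ?_
    have hsub : A ⊆ 𝓕.biUnion id := Finset.subset_biUnion_of_mem id hA
    rw [Finset.inter_eq_right.mpr hsub, (h𝓕 A hA).1]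
  have hV := card_vertices_le_five hQ h𝓕
  omega

lemma finite_facets : {A : Finset ℕ | A.card = 2 ∧ IsFacet q N w Q A}.Finite :=
  Q.powerset.finite_toSet.subset fun _ hA ↦ Finset.mem_powerset.mpr hA.2.subset

theorem ncard_facets_le_five (hQ : Q ⊆ Finset.range N) :
    {A : Finset ℕ | A.card = 2 ∧ IsFacet q N w Q A}.ncard ≤ 5 := by
  rw [Set.ncard_eq_toFinset_card _ finite_facets]
  exact card_facets_le_five hQ fun A hA ↦ finite_facets.mem_toFinset.mp hA

end Facets

section Demazure

variable {q : ℕ → ℕ} {X : Finset ℕ} {g : Perm ℕ} {n p s t x y z : ℕ}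

/-- The Demazure (0-Hecke) product of the letters of the subword `X` of `q` at positions below `t`:
letters which would undo an inversion are skipped. -/
def demazure (q : ℕ → ℕ) (X : Finset ℕ) : ℕ → Perm ℕ
  | 0 => 1
  | t + 1 =>
    if t ∈ X ∧ demazure q X t (q t) < demazure q X t (q t + 1) then
      demazure q X t * swap (q t) (q t + 1)
    else demazure q X t

lemma demazure_succ_of_notMem (ht : t ∉ X) : demazure q X (t + 1) = demazure q X t :=
  if_neg fun h ↦ ht h.1

lemma demazure_eq_prefixProd
    (h : ∀ t ∈ X, demazure q X t (q t) < demazure q X t (q t + 1)) (t : ℕ) :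
    demazure q X t = prefixProd q X t := by
  induction t with
  | zero => rfl
  | succ t ih =>
    by_cases ht : t ∈ X
    · rw [demazure, if_pos ⟨ht, h t ht⟩, prefixProd, if_pos ht, ih]
    · rw [demazure_succ_of_notMem ht, prefixProd, if_neg ht, ih]

lemma isReduced_of_demazure_lt
    (h : ∀ t ∈ X, demazure q X t (q t) < demazure q X t (q t + 1)) : IsReduced q X :=
  fun t ht ↦ demazure_eq_prefixProd h t ▸ h t ht

lemma demazure_erase (hs : ¬demazure q X s (q s) < demazure q X s (q s + 1)) (t : ℕ) :
    demazure q (X.erase s) t = demazure q X t := by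
  induction t with
  | zero => rfl
  | succ t ih =>
    rw [demazure, demazure, ih]
    by_cases hts : t = s
    · subst t
      rw [if_neg fun h ↦ hs h.2, if_neg fun h ↦ hs h.2]
    · simp only [Finset.mem_erase, hts, ne_eq, not_false_eq_true, true_and]

lemma demazure_apply_of_forall_ne (hx : ∀ t ∈ X, x ≠ q t ∧ x ≠ q t + 1) (t : ℕ) :
    demazure q X t x = x := by
  induction t with
  | zero => rfl
  | succ t ih =>
    rw [demazure]
    split_ifs with ht
    · rw [Perm.mul_apply, swap_apply_of_ne_of_ne (hx t ht.1).1 (hx t ht.1).2, ih]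
    · exact ih

/-- The number of `x` in `[y, n)` with `p ≤ g x`. These numbers are the corank matrix that
describes the Bruhat order; here they measure how far a Demazure product has got. -/
def countGE (n p : ℕ) (g : Perm ℕ) (y : ℕ) : ℕ := {x ∈ Finset.Ico y n | p ≤ g x}.card

lemma countGE_one (n p y : ℕ) : countGE n p 1 y = n - max y p := by
  have hfilter : (Finset.Ico y n).filter (p ≤ (1 : Perm ℕ) ·) = Finset.Ico (max y p) n := by
    ext x
    rw [Finset.mem_filter, Finset.mem_Ico, Finset.mem_Ico, Perm.one_apply]
    omega
  rw [countGE, hfilter, Nat.card_Ico]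

lemma countGE_eq_succ_add (hy : y < n) :
    countGE n p g y = countGE n p g (y + 1) + if p ≤ g y then 1 else 0 := by
  rw [countGE, ← Finset.insert_Ico_add_one_left_eq_Ico hy, Finset.filter_insert]
  split_ifs
  · exact Finset.card_insert_of_notMem (by simp)
  · rfl

lemma countGE_mul_swap_of_ne (hz : z + 1 < n) (hy : y ≠ z + 1) :
    countGE n p (g * swap z (z + 1)) y = countGE n p g y := by
  refine Finset.card_equiv (swap z (z + 1)) fun x ↦ ?_
  have hmem : x ∈ Finset.Ico y n ↔ swap z (z + 1) x ∈ Finset.Ico y n := by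
    simp only [Finset.mem_Ico]
    grind
  rw [Finset.mem_filter, Finset.mem_filter, Perm.mul_apply, hmem]

lemma countGE_mul_swap (hz : z + 1 < n) :
    countGE n p (g * swap z (z + 1)) (z + 1) =
      countGE n p g (z + 2) + if p ≤ g z then 1 else 0 := by
  rw [countGE_eq_succ_add hz, countGE_mul_swap_of_ne hz (by omega), Perm.mul_apply,
    swap_apply_right]

lemma countGE_demazure_succ_of_ne (ht : t ∈ X → q t + 1 < n ∧ y ≠ q t + 1) :
    countGE n p (demazure q X (t + 1)) y = countGE n p (demazure q X t) y := by
  rw [demazure]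
  split_ifs with h
  · exact countGE_mul_swap_of_ne (ht h.1).1 (ht h.1).2
  · rfl

lemma countGE_demazure_succ (ht : t ∈ X) (hq : q t + 1 < n) :
    countGE n p (demazure q X (t + 1)) (q t + 1) =
      max (countGE n p (demazure q X t) (q t + 2)) (countGE n p (demazure q X t) (q t) - 1) := by
  have hleft := countGE_eq_succ_add (p := p) (g := demazure q X t) (Nat.lt_of_succ_lt hq)
  have hright := countGE_eq_succ_add (p := p) (g := demazure q X t) hq
  rw [demazure]
  split_ifs with h
  · rw [countGE_mul_swap hq]
    grind
  · grind

end Demazure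

end Subword

section Pairs

variable {n a b : ℕ} {e f : Pair n} {A : Set (Pair n)}

/-- The smaller endpoint of a pair, as a natural number. -/
def Pair.lo (e : Pair n) : ℕ := e.val.1

/-- The larger endpoint of a pair, as a natural number. -/
def Pair.hi (e : Pair n) : ℕ := e.val.2

lemma Pair.lo_lt_hi (e : Pair n) : e.lo < e.hi := e.prop

lemma Pair.hi_lt (e : Pair n) : e.hi < n := e.val.2.isLt

lemma Pair.ext_lo_hi (hlo : e.lo = f.lo) (hhi : e.hi = f.hi) : e = f :=
  Subtype.ext (Prod.ext (Fin.ext hlo) (Fin.ext hhi))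

lemma Pair.exists_lo_hi (hab : a < b) (hb : b < n) : ∃ e : Pair n, e.lo = a ∧ e.hi = b :=
  ⟨⟨(⟨a, hab.trans hb⟩, ⟨b, hb⟩), hab⟩, rfl, rfl⟩

lemma cross_iff : Cross e f ↔
    (e.lo < f.lo ∧ f.lo < e.hi ∧ e.hi < f.hi) ∨ (f.lo < e.lo ∧ e.lo < f.hi ∧ f.hi < e.hi) :=
  Iff.rfl

/-- The position of a pair in the lexicographic reading of the `n × n` grid. -/
def Pair.position (e : Pair n) : ℕ := e.lo * n + e.hi

/-- The word whose letter at the position of the pair `{a, b}` with `a < b` is `b - a - 1`. Its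
value at a position `a * n + b` with `b ≤ a` is the junk value `0`. -/
def letter (n t : ℕ) : ℕ := t % n - t / n - 1

lemma mul_add_div_mod_of_lt (hb : b < n) : (a * n + b) / n = a ∧ (a * n + b) % n = b :=
  (Nat.div_mod_unique (Nat.zero_lt_of_lt hb)).mpr ⟨by ring, hb⟩

lemma letter_mul_add (hb : b < n) : letter n (a * n + b) = b - a - 1 := by
  rw [letter, (mul_add_div_mod_of_lt hb).1, (mul_add_div_mod_of_lt hb).2]

lemma Pair.letter_position (e : Pair n) : letter n e.position = e.hi - e.lo - 1 :=
  letter_mul_add e.hi_lt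

lemma Pair.position_eq_iff (hb : b < n) : e.position = a * n + b ↔ e.lo = a ∧ e.hi = b := by
  refine ⟨fun h ↦ ?_, fun ⟨ha, hb⟩ ↦ by rw [position, ha, hb]⟩
  have ⟨hdiv, hmod⟩ := mul_add_div_mod_of_lt (a := a) hb
  have ⟨hdiv', hmod'⟩ := mul_add_div_mod_of_lt (a := e.lo) e.hi_lt
  rw [position] at h
  exact ⟨by rw [← hdiv', h, hdiv], by rw [← hmod', h, hmod]⟩

lemma Pair.position_injective : Function.Injective (Pair.position (n := n)) := fun _ f h ↦
  have ⟨hlo, hhi⟩ := (position_eq_iff f.hi_lt).mp h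
  ext_lo_hi hlo hhi

lemma Pair.position_lt (e : Pair n) : e.position < n * n :=
  calc e.lo * n + e.hi < (e.lo + 1) * n := by rw [add_one_mul]; exact Nat.add_lt_add_left e.hi_lt _
    _ ≤ n * n := Nat.mul_le_mul_right n (e.lo_lt_hi.trans e.hi_lt)

/-- The subword formed by the positions of the pairs in `A`. -/
noncomputable def positions (A : Set (Pair n)) : Finset ℕ :=
  (Set.toFinite (Pair.position '' A)).toFinset

lemma coe_positions (A : Set (Pair n)) : (positions A : Set ℕ) = Pair.position '' A :=
  Set.Finite.coe_toFinset _

lemma mem_positions {t : ℕ} : t ∈ positions A ↔ ∃ e ∈ A, e.position = t := by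
  rw [← Finset.mem_coe, coe_positions, Set.mem_image]

lemma positions_injective : Function.Injective (positions (n := n)) := fun A B h ↦
  Pair.position_injective.image_injective <| by
    simp only [← coe_positions, h]

lemma position_mem_positions : e.position ∈ positions A ↔ e ∈ A := by
  rw [← Finset.mem_coe, coe_positions, Pair.position_injective.mem_set_image]

lemma exists_of_mul_add_mem_positions (hb : b < n) (h : a * n + b ∈ positions A) :
    ∃ e ∈ A, e.lo = a ∧ e.hi = b := by
  obtain ⟨e, he, hpos⟩ := mem_positions.mp h
  exact ⟨e, he, (Pair.position_eq_iff hb).mp hpos⟩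

lemma positions_subset_range (A : Set (Pair n)) : positions A ⊆ Finset.range (n * n) := by
  intro t ht
  obtain ⟨e, -, rfl⟩ := mem_positions.mp ht
  exact Finset.mem_range.mpr e.position_lt

lemma card_positions (A : Set (Pair n)) : (positions A).card = A.ncard := by
  rw [← Set.ncard_coe_finset, coe_positions, Set.ncard_image_of_injective _ Pair.position_injective]

lemma positions_sdiff (A B : Set (Pair n)) : positions (A \ B) = positions A \ positions B := by
  rw [← Finset.coe_inj, Finset.coe_sdiff]
  simp only [coe_positions, Set.image_sdiff Pair.position_injective]

lemma positions_compl_insert (e : Pair n) (T : Set (Pair n)) :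
    positions (insert e T)ᶜ = (positions Tᶜ).erase e.position := by
  have hcompl : (insert e T)ᶜ = Tᶜ \ {e} := by
    ext f
    simp [and_comm]
  rw [hcompl, positions_sdiff, Finset.erase_eq]
  congr 1
  rw [← Finset.coe_inj, coe_positions, Set.image_singleton, Finset.coe_singleton]

end Pairs

section CrossingFamilies

variable {n k p a b a' b' : ℕ} {e f : Pair n} {T : Set (Pair n)} {C : Finset (Pair n)}

/-- A family of pairwise crossing pairs of `T`, each joining a vertex below `a` to a vertex in
`[p, b)`. For `a ≤ p` the pairs of such a family form a chain, ordered by both endpoints. -/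
structure IsCrossingFamily (T : Set (Pair n)) (p a b : ℕ) (C : Finset (Pair n)) : Prop where
  pairwise : (C : Set (Pair n)).Pairwise Cross
  subset : ↑C ⊆ T
  bounds : ∀ e ∈ C, e.lo < a ∧ p ≤ e.hi ∧ e.hi < b

open Classical in
/-- The largest size of a family as in `IsCrossingFamily`. -/
noncomputable def maxCrossing (T : Set (Pair n)) (p a b : ℕ) : ℕ :=
  (Finset.univ.filter (IsCrossingFamily T p a b)).sup Finset.card

lemma IsCrossingFamily.card_le (hC : IsCrossingFamily T p a b C) : C.card ≤ maxCrossing T p a b :=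
  Finset.le_sup (f := Finset.card) (by simpa using hC)

lemma isCrossingFamily_empty : IsCrossingFamily T p a b ∅ :=
  ⟨by simp, by simp, by simp⟩

lemma exists_isCrossingFamily_card_eq (T : Set (Pair n)) (p a b : ℕ) :
    ∃ C, IsCrossingFamily T p a b C ∧ C.card = maxCrossing T p a b := by
  classical
  obtain ⟨C, hC, hcard⟩ := Finset.exists_mem_eq_sup (Finset.univ.filter (IsCrossingFamily T p a b))
    ⟨∅, Finset.mem_filter.mpr ⟨Finset.mem_univ ∅, isCrossingFamily_empty⟩⟩ Finset.card
  exact ⟨C, (Finset.mem_filter.mp hC).2, hcard.symm⟩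

lemma maxCrossing_le {m : ℕ} (h : ∀ C, IsCrossingFamily T p a b C → C.card ≤ m) :
    maxCrossing T p a b ≤ m := by
  obtain ⟨C, hC, hcard⟩ := exists_isCrossingFamily_card_eq T p a b
  exact hcard ▸ h C hC

lemma maxCrossing_mono (ha : a ≤ a') (hb : b ≤ b') :
    maxCrossing T p a b ≤ maxCrossing T p a' b' := by
  refine maxCrossing_le fun C hC ↦ IsCrossingFamily.card_le ⟨hC.pairwise, hC.subset, fun e he ↦ ?_⟩
  obtain ⟨hlo, hp, hhi⟩ := hC.bounds e he
  exact ⟨hlo.trans_le ha, hp, hhi.trans_le hb⟩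

lemma maxCrossing_eq_zero (h : a = 0 ∨ b ≤ p) : maxCrossing T p a b = 0 := by
  refine Nat.le_zero.mp (maxCrossing_le fun C hC ↦ ?_)
  rw [Nat.le_zero, Finset.card_eq_zero, Finset.eq_empty_iff_forall_notMem]
  intro e he
  have := hC.bounds e he
  omega

lemma IsCrossingFamily.lt_and_lt_or (hC : IsCrossingFamily T p a b C) (he : e ∈ C) (hf : f ∈ C)
    (hne : e ≠ f) : (e.lo < f.lo ∧ e.hi < f.hi) ∨ (f.lo < e.lo ∧ f.hi < e.hi) :=
  (cross_iff.mp (hC.pairwise he hf hne)).imp (fun h ↦ ⟨h.1, h.2.2⟩) fun h ↦ ⟨h.1, h.2.2⟩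

lemma IsCrossingFamily.erase_top (hC : IsCrossingFamily T p (a + 1) (b + 1) C) (he : e ∈ C)
    (htop : e.lo = a ∨ e.hi = b) : IsCrossingFamily T p a b (C.erase e) where
  pairwise := hC.pairwise.mono (by simp)
  subset := (Finset.coe_subset.mpr (C.erase_subset e)).trans hC.subset
  bounds f hf := by
    have hbound_e := hC.bounds e he
    have hbound_f := hC.bounds f (Finset.mem_of_mem_erase hf)
    have horder := hC.lt_and_lt_or he (Finset.mem_of_mem_erase hf) (Finset.ne_of_mem_erase hf).symm
    omega

lemma maxCrossing_succ_succ_le : maxCrossing T p (a + 1) (b + 1) ≤ maxCrossing T p a b + 1 := by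
  refine maxCrossing_le fun C hC ↦ ?_
  by_cases htop : ∃ e ∈ C, e.lo = a ∨ e.hi = b
  · obtain ⟨e, he, htop⟩ := htop
    rw [← Finset.card_erase_add_one he]
    exact Nat.succ_le_succ (hC.erase_top he htop).card_le
  · push Not at htop
    refine Nat.le_succ_of_le (IsCrossingFamily.card_le ⟨hC.pairwise, hC.subset, fun e he ↦ ?_⟩)
    have := hC.bounds e he
    have := htop e he
    omega

lemma IsCrossingFamily.insert_top (hC : IsCrossingFamily T p e.lo e.hi C) (he : e ∈ T)
    (hlo : e.lo < p) (hhi : p ≤ e.hi) :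
    IsCrossingFamily T p (e.lo + 1) (e.hi + 1) (insert e C) where
  pairwise := by
    rw [Finset.coe_insert]
    refine hC.pairwise.insert fun f hf _ ↦ ?_
    have := hC.bounds f hf
    rw [cross_iff, cross_iff]
    omega
  subset := by
    rw [Finset.coe_insert]
    exact Set.insert_subset he hC.subset
  bounds f hf := by
    rcases Finset.mem_insert.mp hf with rfl | hf
    · omega
    · have := hC.bounds f hf
      omega

lemma maxCrossing_succ_succ_of_mem (he : e ∈ T) (hlo : e.lo < p) (hhi : p ≤ e.hi) :
    maxCrossing T p (e.lo + 1) (e.hi + 1) = maxCrossing T p e.lo e.hi + 1 := by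
  refine le_antisymm maxCrossing_succ_succ_le ?_
  obtain ⟨C, hC, hcard⟩ := exists_isCrossingFamily_card_eq T p e.lo e.hi
  have heC : e ∉ C := fun he ↦ (hC.bounds e he).1.false
  rw [← hcard, ← Finset.card_insert_of_notMem heC]
  exact (hC.insert_top he hlo hhi).card_le

lemma maxCrossing_succ_succ_of_notMem (he : e ∉ T) :
    maxCrossing T p (e.lo + 1) (e.hi + 1) =
      max (maxCrossing T p e.lo (e.hi + 1)) (maxCrossing T p (e.lo + 1) e.hi) := by
  refine le_antisymm (maxCrossing_le fun C hC ↦ ?_)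
    (max_le (maxCrossing_mono (by omega) le_rfl) (maxCrossing_mono le_rfl (by omega)))
  by_cases htop : ∃ f ∈ C, f.lo = e.lo
  · obtain ⟨f, hf, hlo⟩ := htop
    have hhi : f.hi ≠ e.hi := fun hhi ↦ he (Pair.ext_lo_hi hlo hhi ▸ hC.subset hf)
    refine le_max_of_le_right (IsCrossingFamily.card_le ⟨hC.pairwise, hC.subset, fun g hg ↦ ?_⟩)
    have hbound_f := hC.bounds f hf
    have hbound_g := hC.bounds g hg
    by_cases hfg : f = g
    · subst g
      omega
    · have := hC.lt_and_lt_or hf hg hfg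
      omega
  · push Not at htop
    refine le_max_of_le_left (IsCrossingFamily.card_le ⟨hC.pairwise, hC.subset, fun g hg ↦ ?_⟩)
    have := hC.bounds g hg
    have := htop g hg
    omega

lemma crossingFree_iff_forall_isCrossingFamily :
    CrossingFree n k T ↔ ∀ p ≤ n, ∀ C, IsCrossingFamily T p p n C → C.card ≤ k := by
  constructor
  · intro h p _ C hC
    by_contra! hlt
    obtain ⟨D, hDC, hD⟩ := Finset.exists_subset_card_eq (Nat.succ_le_of_lt hlt)
    exact h ⟨D, (Finset.coe_subset.mpr hDC).trans hC.subset, hD, fun e he f hf hne ↦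
      hC.pairwise (hDC he) (hDC hf) hne⟩
  · rintro h ⟨C, hCT, hcard, hC⟩
    -- Pairwise crossing pairs are all separated by the smallest of their larger endpoints.
    obtain ⟨e, he, hmin⟩ := C.exists_min_image Pair.hi (Finset.card_pos.mp (by omega))
    refine absurd (h e.hi e.hi_lt.le C ⟨hC, hCT, fun f hf ↦ ⟨?_, hmin f hf, f.hi_lt⟩⟩) (by omega)
    by_cases hfe : f = e
    · exact hfe ▸ e.lo_lt_hi
    · have := cross_iff.mp (hC f hf e he hfe)
      have := e.lo_lt_hi
      omega

lemma crossingFree_iff_maxCrossing_le :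
    CrossingFree n k T ↔ ∀ p ≤ n, maxCrossing T p p n ≤ k := by
  rw [crossingFree_iff_forall_isCrossingFamily]
  exact forall₂_congr fun p _ ↦ ⟨maxCrossing_le, fun h C hC ↦ hC.card_le.trans h⟩

end CrossingFamilies

section Growth

open Subword

variable {n k p a b y : ℕ} {T : Set (Pair n)}

/-- The value predicted for `countGE n p` of the Demazure product of the pairs missing from `T`,
at the node `(a, b)` of the growth diagram. -/
noncomputable def growth (T : Set (Pair n)) (p a b : ℕ) : ℕ :=
  maxCrossing T p a b + (n - max b p)

lemma growth_zero_left : growth T p 0 b = n - max b p := by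
  rw [growth, maxCrossing_eq_zero (.inl rfl), zero_add]

lemma growth_of_le (hb : b ≤ p) : growth T p a b = n - p := by
  rw [growth, maxCrossing_eq_zero (.inr hb), zero_add, max_eq_right hb]

lemma growth_succ_succ_of_mem {e : Pair n} (he : e ∈ T) (hlo : e.lo < p) :
    growth T p (e.lo + 1) (e.hi + 1) = growth T p e.lo e.hi := by
  rcases lt_or_ge e.hi p with hhi | hhi
  · rw [growth_of_le hhi, growth_of_le hhi.le]
  · rw [growth, growth, maxCrossing_succ_succ_of_mem he hlo hhi]
    have := e.hi_lt
    omega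

lemma growth_succ_succ_of_notMem {e : Pair n} (he : e ∉ T) :
    growth T p (e.lo + 1) (e.hi + 1) =
      max (growth T p e.lo (e.hi + 1)) (growth T p (e.lo + 1) e.hi - 1) := by
  rcases lt_or_ge e.hi p with hhi | hhi
  · rw [growth_of_le hhi, growth_of_le hhi, growth_of_le hhi.le, max_eq_left (Nat.sub_le _ _)]
  · simp only [growth, maxCrossing_succ_succ_of_notMem he]
    have := e.hi_lt
    omega

lemma letter_add_one_of_mem_positions {A : Set (Pair n)} (hb : b < n)
    (h : a * n + b ∈ positions A) : a < b ∧ letter n (a * n + b) + 1 = b - a := by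
  obtain ⟨e, -, rfl, rfl⟩ := exists_of_mul_add_mem_positions hb h
  have := e.lo_lt_hi
  rw [letter_mul_add hb]
  omega

lemma countGE_demazure_letter_succ_of_ne {A : Set (Pair n)} (hb : b < n)
    (hy : a < b → a + y ≠ b) :
    countGE n p (demazure (letter n) (positions A) (a * n + b + 1)) y =
      countGE n p (demazure (letter n) (positions A) (a * n + b)) y := by
  refine countGE_demazure_succ_of_ne fun ht ↦ ?_
  have := letter_add_one_of_mem_positions hb ht
  omega

/-- The growth diagram is correct along the staircase at time `a * n + b`, which runs through
row `a + 1` up to column `b` and through row `a` from there on. -/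
structure GrowthAt (T : Set (Pair n)) (p a b : ℕ) : Prop where
  current : ∀ y, b ≤ a + y → a + y ≤ n →
    countGE n p (demazure (letter n) (positions Tᶜ) (a * n + b)) y = growth T p a (a + y)
  next : ∀ y, a + 1 + y ≤ b →
    countGE n p (demazure (letter n) (positions Tᶜ) (a * n + b)) y =
      growth T p (a + 1) (a + 1 + y)

lemma GrowthAt.countGE_succ (h : GrowthAt T p a b) (ha : a < p) (hb : b < n) (hy : a + y = b) :
    countGE n p (demazure (letter n) (positions Tᶜ) (a * n + b + 1)) y =
      growth T p (a + 1) (b + 1) := by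
  rcases y with _ | z
  · rw [countGE_demazure_letter_succ_of_ne hb (by omega), h.current 0 hy.ge (by omega), hy,
      growth_of_le (by omega), growth_of_le (by omega)]
  obtain ⟨e, rfl, rfl⟩ := Pair.exists_lo_hi (show a < b by omega) hb
  have hletter : letter n (e.lo * n + e.hi) = z := by rw [letter_mul_add hb]; omega
  by_cases he : e ∈ T
  · have hpos : e.lo * n + e.hi ∉ positions Tᶜ := position_mem_positions.not.mpr (not_not.mpr he)
    rw [demazure_succ_of_notMem hpos, h.current (z + 1) hy.ge (by omega), hy,
      growth_succ_succ_of_mem he ha]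
  · have hstep := countGE_demazure_succ (q := letter n) (X := positions Tᶜ) (p := p) (n := n)
      (position_mem_positions.mpr he) (by rw [Pair.position, hletter]; omega)
    rw [Pair.position, hletter, h.current (z + 2) (by omega) (by omega), h.next z (by omega),
      show e.lo + (z + 2) = e.hi + 1 by omega, show e.lo + 1 + z = e.hi by omega] at hstep
    rw [hstep, growth_succ_succ_of_notMem he]

lemma GrowthAt.succ (h : GrowthAt T p a b) (ha : a < p) (hb : b < n) : GrowthAt T p a (b + 1) where
  current y hby hyn := by
    rw [← add_assoc, countGE_demazure_letter_succ_of_ne hb (by omega),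
      h.current y (by omega) hyn]
  next y hyb := by
    rw [← add_assoc]
    rcases Nat.lt_or_ge (a + y) b with hlt | hge
    · rw [countGE_demazure_letter_succ_of_ne hb (by omega), h.next y (by omega)]
    · rw [h.countGE_succ ha hb (by omega)]
      congr 1
      omega

lemma growthAt_of_growthAt_zero (h : GrowthAt T p a 0) (ha : a < p) (hb : b ≤ n) :
    GrowthAt T p a b := by
  induction b with
  | zero => exact h
  | succ b ih => exact (ih (by omega)).succ ha hb

lemma growthAt_zero (ha : a ≤ p) : GrowthAt T p a 0 := by
  induction a with
  | zero =>
    refine ⟨fun y _ _ ↦ ?_, fun y hy ↦ by omega⟩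
    rw [zero_mul, zero_add, zero_add, growth_zero_left, demazure, countGE_one]
  | succ a ih =>
    have hend := growthAt_of_growthAt_zero (ih (by omega)) ha le_rfl
    refine ⟨fun y _ hy ↦ ?_, fun y hy ↦ by omega⟩
    rw [add_zero, add_one_mul, hend.next y hy]

lemma countGE_demazure_rows_ge {A : Set (Pair n)} {t : ℕ} (hp : p ≤ n) (ht : p * n ≤ t) :
    countGE n p (demazure (letter n) (positions A) t) (n - p) =
      countGE n p (demazure (letter n) (positions A) (p * n)) (n - p) := by
  induction t, ht using Nat.le_induction with
  | base => rfl
  | succ t ht ih =>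
    rcases Nat.eq_zero_or_pos n with rfl | hn
    · simp [countGE]
    have hmod := Nat.mod_lt t hn
    have hrow : p ≤ t / n := (Nat.le_div_iff_mul_le hn).mpr ht
    rw [← ih, ← Nat.div_add_mod' t n, countGE_demazure_letter_succ_of_ne hmod (by omega)]

theorem countGE_demazure_eq_maxCrossing (T : Set (Pair n)) (hp : p ≤ n) :
    countGE n p (demazure (letter n) (positions Tᶜ) (n * n)) (n - p) = maxCrossing T p p n := by
  have hgrowth : GrowthAt T p p 0 := growthAt_zero le_rfl
  have hrow := hgrowth.current (n - p) (Nat.zero_le _) (by omega)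
  rw [countGE_demazure_rows_ge hp (Nat.mul_le_mul_right n hp), ← add_zero (p * n), hrow, growth]
  rw [show p + (n - p) = n by omega, max_eq_left hp, Nat.sub_self, add_zero]

theorem crossingFree_iff_countGE_demazure_le :
    CrossingFree n k T ↔
      ∀ p ≤ n, countGE n p (demazure (letter n) (positions Tᶜ) (n * n)) (n - p) ≤ k := by
  rw [crossingFree_iff_maxCrossing_le]
  exact forall₂_congr fun p hp ↦ by rw [countGE_demazure_eq_maxCrossing T hp]

end Growth

section MiddleReversal

open Subword

variable {n k x : ℕ} {g : Perm ℕ}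

/-- The permutation which reverses the interval `[k, n - k)` and fixes everything else. -/
def middleReversal (n k : ℕ) : Perm ℕ :=
  Function.Involutive.toPerm (fun x ↦ if k ≤ x ∧ x < n - k then n - 1 - x else x) fun x ↦ by
    grind

lemma middleReversal_apply :
    middleReversal n k x = if k ≤ x ∧ x < n - k then n - 1 - x else x := rfl

lemma middleReversal_symm : (middleReversal n k).symm = middleReversal n k := rfl

lemma apply_lt_of_countGE_le (hfix : ∀ x, n - k ≤ x → g x = x)
    (hcount : ∀ p ≤ n, countGE n p g (n - p) ≤ k) (hk : k ≤ x) (hx : x < n - k) :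
    g x < n - x := by
  by_contra! hge
  have hsub : insert x (Finset.Ico (n - k) n) ⊆ {y ∈ Finset.Ico x n | n - x ≤ g y} := by
    intro y hy
    rw [Finset.mem_insert, Finset.mem_Ico] at hy
    rw [Finset.mem_filter, Finset.mem_Ico]
    rcases hy with rfl | hy
    · omega
    · rw [hfix y hy.1]
      omega
  have hcard := Finset.card_le_card hsub
  rw [Finset.card_insert_of_notMem (by grind), Nat.card_Ico] at hcard
  have hle := hcount (n - x) (Nat.sub_le n x)
  rw [show n - (n - x) = x by omega, countGE] at hle
  omega

lemma eq_middleReversal (hfix : ∀ x, x < k ∨ n - k ≤ x → g x = x)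
    (hcount : ∀ p ≤ n, countGE n p g (n - p) ≤ k) : g = middleReversal n k := by
  -- The bound `g x ≤ n - 1 - x` is attained from the right end on, since smaller values are taken.
  have hreverse : ∀ v, k ≤ v → v < n - k → g (n - 1 - v) = v := by
    intro v
    induction v using Nat.strong_induction_on with
    | _ v ih =>
      intro hk hv
      have hle := apply_lt_of_countGE_le (fun x hx ↦ hfix x (.inr hx)) hcount
        (x := n - 1 - v) (by omega) (by omega)
      by_contra hne
      have htaken : ∃ y, y ≠ n - 1 - v ∧ g y = g (n - 1 - v) := by
        by_cases hu : k ≤ g (n - 1 - v)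
        · exact ⟨n - 1 - g (n - 1 - v), by omega, ih _ (by omega) hu (by omega)⟩
        · exact ⟨g (n - 1 - v), by omega, hfix _ (by omega)⟩
      obtain ⟨y, hy, hgy⟩ := htaken
      exact hy (g.injective hgy)
  ext x
  rw [middleReversal_apply]
  split_ifs with hx
  · rw [← hreverse (n - 1 - x) (by omega) (by omega), show n - 1 - (n - 1 - x) = x by omega]
  · exact hfix x (by omega)

lemma ncard_inversions_middleReversal (n k : ℕ) :
    {p : ℕ × ℕ | p.1 < p.2 ∧ (middleReversal n k).symm p.2 < (middleReversal n k).symm p.1}.ncard =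
      (n - 2 * k).choose 2 := by
  have hset : {p : ℕ × ℕ | p.1 < p.2 ∧
      (middleReversal n k).symm p.2 < (middleReversal n k).symm p.1} =
      {p ∈ Finset.Ico k (n - k) ×ˢ Finset.Ico k (n - k) | p.1 < p.2} := by
    ext ⟨x, y⟩
    simp only [middleReversal_symm, middleReversal_apply, Set.mem_ofPred_eq, Finset.coe_filter,
      Finset.mem_product, Finset.mem_Ico]
    grind
  rw [hset, Set.ncard_coe_finset, Finset.card_product_filter_lt, Nat.card_Ico]
  congr 1
  omega

end MiddleReversal

section Triangulations

open Subword

variable {n k : ℕ} {e f : Pair n} {C : Finset (Pair n)} {F T : Set (Pair n)}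

lemma Cross.endpoints_ne (h : Cross e f) :
    e.lo ≠ f.lo ∧ e.lo ≠ f.hi ∧ e.hi ≠ f.lo ∧ e.hi ≠ f.hi := by
  have he := e.lo_lt_hi
  have hf := f.lo_lt_hi
  rw [cross_iff] at h
  omega

lemma card_le_of_pairwise_cross_of_endpoint_mem (hC : ∀ e ∈ C, ∀ f ∈ C, e ≠ f → Cross e f)
    {S : Finset ℕ} (hS : ∀ f ∈ C, f.lo ∈ S ∨ f.hi ∈ S) : C.card ≤ S.card := by
  refine Finset.card_le_card_of_injOn (fun f ↦ if f.lo ∈ S then f.lo else f.hi) ?_ ?_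
  · intro f hf
    have hmem := hS f hf
    simp only [Finset.mem_coe]
    split_ifs <;> tauto
  · intro e he f hf hef
    by_contra hne
    have hends := (hC e he f hf hne).endpoints_ne
    simp only at hef
    split_ifs at hef <;> omega

lemma card_le_pairLen (hC : ∀ e ∈ C, ∀ f ∈ C, e ≠ f → Cross e f) (he : e ∈ C) :
    C.card ≤ pairLen n e := by
  have hlt := e.lo_lt_hi
  have hn := e.hi_lt
  have hcross : ∀ f ∈ C.erase e, Cross e f := fun f hf ↦
    hC e he f (Finset.mem_of_mem_erase hf) (Finset.ne_of_mem_erase hf).symm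
  have herase {S : Finset ℕ} (hS : ∀ f ∈ C.erase e, f.lo ∈ S ∨ f.hi ∈ S) : C.card ≤ S.card + 1 := by
    rw [← Finset.card_erase_add_one he]
    have hpairwise : ∀ f ∈ C.erase e, ∀ g ∈ C.erase e, f ≠ g → Cross f g := fun f hf g hg ↦
      hC f (Finset.mem_of_mem_erase hf) g (Finset.mem_of_mem_erase hg)
    exact Nat.add_le_add_right (card_le_of_pairwise_cross_of_endpoint_mem hpairwise hS) 1
  have hinside : C.card ≤ (Finset.Ioo e.lo e.hi).card + 1 := herase fun f hf ↦ by
    have hef := cross_iff.mp (hcross f hf)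
    simp only [Finset.mem_Ioo]
    omega
  have houtside : C.card ≤ (Finset.range n \ Finset.Icc e.lo e.hi).card + 1 :=
    herase fun f hf ↦ by
      have hef := cross_iff.mp (hcross f hf)
      have hfn := f.hi_lt
      simp only [Finset.mem_sdiff, Finset.mem_range, Finset.mem_Icc]
      omega
  have hIcc : Finset.Icc e.lo e.hi ⊆ Finset.range n := fun x hx ↦
    Finset.mem_range.mpr ((Finset.mem_Icc.mp hx).2.trans_lt hn)
  rw [Nat.card_Ioo] at hinside
  rw [Finset.card_sdiff_of_subset hIcc, Finset.card_range, Nat.card_Icc] at houtside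
  change C.card ≤ min (e.hi - e.lo) (n - (e.hi - e.lo))
  omega

lemma IsTriangulation.mem_of_crossingFree_insert (hT : IsTriangulation n k T)
    (he : CrossingFree n k (insert e T)) : e ∈ T :=
  hT.2 _ he (Set.subset_insert e T) ▸ Set.mem_insert e T

lemma IsTriangulation.mem_of_pairLen_le (hT : IsTriangulation n k T) (he : pairLen n e ≤ k) :
    e ∈ T := by
  refine hT.mem_of_crossingFree_insert fun ⟨C, hCT, hcard, hC⟩ ↦ ?_
  by_cases heC : e ∈ C
  · have := card_le_pairLen hC heC
    omega
  · exact hT.1 ⟨C, (Set.subset_insert_iff_of_notMem heC).mp hCT, hcard, hC⟩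

lemma IsTriangulation.le_letter (hT : IsTriangulation n k T) {t : ℕ} (ht : t ∈ positions Tᶜ) :
    k ≤ letter n t ∧ letter n t + 1 < n - k := by
  obtain ⟨e, he, rfl⟩ := mem_positions.mp ht
  have hlen : k < min (e.hi - e.lo) (n - (e.hi - e.lo)) :=
    not_le.mp fun hle ↦ he (hT.mem_of_pairLen_le hle)
  rw [e.letter_position]
  omega

lemma IsTriangulation.demazure_lt (hT : IsTriangulation n k T) :
    ∀ t ∈ positions Tᶜ, demazure (letter n) (positions Tᶜ) t (letter n t) <
      demazure (letter n) (positions Tᶜ) t (letter n t + 1) := by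
  intro t ht
  by_contra hlt
  obtain ⟨e, he, rfl⟩ := mem_positions.mp ht
  refine he (hT.mem_of_crossingFree_insert ?_)
  rw [crossingFree_iff_countGE_demazure_le, positions_compl_insert, demazure_erase hlt]
  exact crossingFree_iff_countGE_demazure_le.mp hT.1

lemma IsTriangulation.isReduced (hT : IsTriangulation n k T) :
    IsReduced (letter n) (positions Tᶜ) :=
  isReduced_of_demazure_lt hT.demazure_lt

lemma IsTriangulation.prefixProd_eq (hT : IsTriangulation n k T) :
    prefixProd (letter n) (positions Tᶜ) (n * n) = middleReversal n k := by
  rw [← demazure_eq_prefixProd hT.demazure_lt]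
  refine eq_middleReversal (fun x hx ↦ demazure_apply_of_forall_ne (fun t ht ↦ ?_) _)
    (crossingFree_iff_countGE_demazure_le.mp hT.1)
  have := hT.le_letter ht
  omega

lemma IsTriangulation.ncard_compl (hT : IsTriangulation n k T) :
    Tᶜ.ncard = (n - 2 * k).choose 2 := by
  rw [← card_positions, ← ncard_inversions_prefixProd hT.isReduced (positions_subset_range _),
    hT.prefixProd_eq, ncard_inversions_middleReversal]

lemma card_pair (n : ℕ) : Nat.card (Pair n) = n.choose 2 := by
  rw [Nat.card_eq_fintype_card, Fintype.card_subtype, Fintype.card_product_filter_lt,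
    Fintype.card_fin]

lemma choose_two_two_mul_add (k m : ℕ) :
    (2 * k + m).choose 2 = k * (2 * (k + m) - 1) + m.choose 2 := by
  rcases k with _ | k
  · simp
  rw [show 2 * (k + 1 + m) - 1 = 2 * k + 2 * m + 1 by omega]
  qify
  rw [Nat.cast_choose_two, Nat.cast_choose_two]
  push_cast
  ring

lemma IsTriangulation.ncard_eq (hT : IsTriangulation n k T) (hk : 2 * k ≤ n) :
    T.ncard = k * (2 * n - 2 * k - 1) := by
  have hsum := Set.ncard_add_ncard_compl T
  obtain ⟨m, rfl⟩ := Nat.exists_eq_add_of_le hk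
  rw [hT.ncard_compl, card_pair, Nat.add_sub_cancel_left, choose_two_two_mul_add] at hsum
  rw [Nat.add_right_cancel hsum, show 2 * (2 * k + m) - 2 * k = 2 * (k + m) by omega]

lemma IsTriangulation.isFacet (hT : IsTriangulation n k T) (hF : F ⊆ T) :
    IsFacet (letter n) (n * n) (middleReversal n k) (positions Fᶜ) (positions (T \ F)) := by
  have hsdiff : positions Fᶜ \ positions (T \ F) = positions Tᶜ := by
    rw [← positions_sdiff]
    congr 1
    ext e
    have := @hF e
    simp only [Set.mem_sdiff, Set.mem_compl_iff]
    tauto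
  refine ⟨?_, hsdiff ▸ hT.isReduced, hsdiff ▸ hT.prefixProd_eq⟩
  intro t ht
  obtain ⟨e, he, rfl⟩ := mem_positions.mp ht
  exact position_mem_positions.mpr he.2

end Triangulations

/-- Every `(k+1)`-crossing-free set with `k(2n-2k-1) - 2` elements is contained
in at most five `k`-triangulations of the `n`-gon (links of dimension one are cycles of length
at most five). -/
theorem stmt8 (k n : ℕ) (hn : 2 * k + 1 ≤ n) (F : Set (Pair n))
    (hF : CrossingFree n k F) (hcard : F.ncard = k * (2 * n - 2 * k - 1) - 2) :
    {T : Set (Pair n) | IsTriangulation n k T ∧ F ⊆ T}.ncard ≤ 5 := by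
  rcases k.eq_zero_or_pos with rfl | hk
  · have hsub : {T : Set (Pair n) | IsTriangulation n 0 T ∧ F ⊆ T} ⊆ {∅} := fun T hT ↦
      (Set.ncard_eq_zero (Set.toFinite T)).mp (by simpa using hT.1.ncard_eq (by omega))
    exact (Set.ncard_le_ncard hsub).trans (by simp)
  have hcard_link : ∀ T, IsTriangulation n k T → F ⊆ T → (positions (T \ F)).card = 2 := by
    intro T hT hFT
    have htwo : 2 ≤ k * (2 * n - 2 * k - 1) := Nat.mul_le_mul hk (by omega : 2 ≤ _)
    rw [card_positions, Set.ncard_sdiff hFT, hT.ncard_eq (by omega), hcard]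
    omega
  have hinj : Set.InjOn (fun T ↦ positions (T \ F)) {T | IsTriangulation n k T ∧ F ⊆ T} := by
    intro T hT T' hT' h
    rw [← Set.sdiff_union_of_subset hT.2, positions_injective h, Set.sdiff_union_of_subset hT'.2]
  calc {T | IsTriangulation n k T ∧ F ⊆ T}.ncard
      ≤ {A | A.card = 2 ∧ Subword.IsFacet (letter n) (n * n) (middleReversal n k)
          (positions Fᶜ) A}.ncard :=
        Set.ncard_le_ncard_of_injOn _ (fun T hT ↦ ⟨hcard_link T hT.1 hT.2, hT.1.isFacet hT.2⟩)
          hinj Subword.finite_facets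
    _ ≤ 5 := Subword.ncard_facets_le_five (positions_subset_range _)
end

section
/- Let d ≥ 1 and let t₁ < t₂ < … < tₙ be real numbers. Set p_i = (1, t_i, …, t_i^{d−1}) ∈ ℝ^d, p′_i = (t_i, t_i², …, t_i^d) ∈ ℝ^d, and q_i = (t_i, t_i²) ∈ ℝ². Then there exist invertible real dn×dn matrices A and B and positive real numbers α_e and β_e for each pair e of {1,…,n} such that, for every pair e, the row of R(p′₁,…,p′ₙ) indexed by e equals α_e times the product of the row of H(p₁,…,pₙ) indexed by e with A, and the row of C_d(q₁,…,qₙ) indexed by e equals β_e times the product of the row of H(p₁,…,pₙ) indexed by e with B. In particular the rows of the three matrices define the same oriented matroid. -/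
open scoped BigOperators

/-!
Each row of the three matrices is supported on the blocks of its two endpoints, so right
multiplication by a block diagonal matrix with blocks `Mᵢ` acts on the two blocks separately and
sends the row of `H(p)` at `{i,j}` to the row with blocks `pⱼ Mᵢ` and `-pᵢ Mⱼ`. When the columns
of `Mᵢ` hold the coefficients of polynomials `P₀, …, P_{d-1}` with `P_a` monic of degree `a`, the
matrix `Mᵢ` is unitriangular and `pⱼ Mᵢ` is the vector of values `P_a(tⱼ)`. It remains to find
polynomials `P_a`, depending on `tᵢ`, whose value at `tⱼ` is the required entry up to a factor
depending only on `tᵢ` and `tⱼ`: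

* `tⱼ^(a+1) - tᵢ^(a+1)` is `tⱼ - tᵢ` times the value at `tⱼ` of the quotient of `X^(a+1)` by
  `X - tᵢ`;
* `(tᵢ - tⱼ)^(d-1-a) (tᵢ² - tⱼ²)^a` is `(tᵢ - tⱼ)^(d-1)` times the value at `tⱼ` of `(X + tᵢ)^a`.

The signs `-1` and `(-1)^(d-1)` that make the row factors positive go into the block diagonal
matrices.
-/

section BlockRows

open Matrix

variable {ι κ R : Type*} [DecidableEq ι]

/-- The vector made of `ι`-indexed blocks with `u` in block `i`, `v` in block `j` and zeros
elsewhere: the common shape of the rows of `R(p)`, `H(p)` and `C_d(q)`. For `i = j` the block is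
`u`. -/
def edgeRow [Zero R] (i j : ι) (u v : κ → R) : ι × κ → R :=
  fun ma => if ma.1 = i then u ma.2 else if ma.1 = j then v ma.2 else 0

theorem smul_edgeRow {S : Type*} [Zero R] [SMulZeroClass S R] (c : S) (i j : ι) (u v : κ → R) :
    c • edgeRow i j u v = edgeRow i j (c • u) (c • v) := by
  ext ma
  simp only [edgeRow, Pi.smul_apply, smul_ite, smul_zero]

variable [Fintype ι] [Fintype κ]

section VecMul

variable [NonUnitalNonAssocSemiring R]

theorem vecMul_comp_diagonal_apply (w : ι × κ → R) (M : ι → Matrix κ κ R) (m : ι) (a : κ) :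
    (w ᵥ* Matrix.comp ι ι κ κ R (diagonal M)) (m, a) = ((fun b => w (m, b)) ᵥ* M m) a := by
  simp only [vecMul, dotProduct, Matrix.comp_apply, Fintype.sum_prod_type]
  rw [Fintype.sum_eq_single m fun k hk => by simp [diagonal_apply_ne _ hk], diagonal_apply_eq]

theorem edgeRow_vecMul_comp_diagonal (i j : ι) (u v : κ → R) (M : ι → Matrix κ κ R) :
    edgeRow i j u v ᵥ* Matrix.comp ι ι κ κ R (diagonal M) =
      edgeRow i j (u ᵥ* M i) (v ᵥ* M j) := by
  ext ⟨m, a⟩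
  rw [vecMul_comp_diagonal_apply]
  simp only [edgeRow]
  split_ifs with hi hj
  · rw [hi]
  · rw [hj]
  · exact congrFun (zero_vecMul (M m)) a

end VecMul

theorem isUnit_comp_diagonal [DecidableEq κ] [Semiring R] {M : ι → Matrix κ κ R}
    (hM : ∀ i, IsUnit (M i)) :
    IsUnit (Matrix.comp ι ι κ κ R (diagonal M)) :=
  ((Pi.isUnit_iff.2 hM).map (diagonalRingHom ι (Matrix κ κ R))).map (compRingEquiv ι κ R)

end BlockRows

section RowShapes

variable {d n : ℕ}

theorem bjRow_eq_edgeRow (p : Fin n → Fin d → ℝ) (e : Pair n) :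
    bjRow p e = edgeRow e.val.1 e.val.2 (p e.val.1 - p e.val.2) (p e.val.2 - p e.val.1) :=
  rfl

theorem hypRow_eq_edgeRow (p : Fin n → Fin d → ℝ) (e : Pair n) :
    hypRow p e = edgeRow e.val.1 e.val.2 (p e.val.2) (-p e.val.1) :=
  rfl

theorem cofRow_eq_edgeRow (q : Fin n → ℝ × ℝ) (e : Pair n) :
    cofRow d q e = edgeRow e.val.1 e.val.2 (cvec d (q e.val.1) (q e.val.2))
      (-cvec d (q e.val.1) (q e.val.2)) :=
  rfl

end RowShapes

section PolynomialBlocks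

open Matrix Polynomial

variable {R : Type*} {d n : ℕ}

theorem pow_vecMul_coeff [CommSemiring R] {κ : Type*} (P : κ → R[X])
    (hdeg : ∀ a, (P a).natDegree < d) (y : R) :
    (fun b : Fin d => y ^ (b : ℕ)) ᵥ* Matrix.of (fun b a => (P a).coeff b) =
      fun a => (P a).eval y := by
  ext a
  rw [eval_eq_sum_range' (hdeg a), ← Fin.sum_univ_eq_sum_range fun b => (P a).coeff b * y ^ b]
  simp only [vecMul, dotProduct, of_apply, mul_comm]

theorem sub_mul_eval_divByMonic_X_sub_C [CommRing R] (f : R[X]) (x y : R) :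
    (y - x) * (f /ₘ (X - C x)).eval y = f.eval y - f.eval x := by
  have h := congrArg (eval y) (X_sub_C_mul_divByMonic_eq_sub_modByMonic f x)
  simpa only [eval_mul, eval_sub, eval_X, eval_C, modByMonic_X_sub_C_eq_C_eval] using h

theorem exists_isUnit_det_hypRow_vecMul_eq_edgeRow_eval (s : ℝˣ) (t : Fin n → ℝ)
    (P : Fin n → Fin d → ℝ[X]) (hmonic : ∀ i a, (P i a).Monic)
    (hdeg : ∀ i a, (P i a).natDegree = a) :
    ∃ A : Matrix (Fin n × Fin d) (Fin n × Fin d) ℝ, IsUnit A.det ∧ ∀ e : Pair n,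
      hypRow (fun i (a : Fin d) => t i ^ (a : ℕ)) e ᵥ* A =
        s • edgeRow e.val.1 e.val.2 (fun a => (P e.val.1 a).eval (t e.val.2))
          (-fun a => (P e.val.2 a).eval (t e.val.1)) := by
  let M : Fin n → Matrix (Fin d) (Fin d) ℝ := fun i => of fun b a => (P i a).coeff b
  have hM (i : Fin n) : IsUnit (M i) := by
    rw [isUnit_iff_isUnit_det, det_matrixOfPolynomials (P i) (hdeg i) (hmonic i)]
    exact isUnit_one
  have vecMul_M (i : Fin n) (y : ℝ) :
      (fun b : Fin d => y ^ (b : ℕ)) ᵥ* M i = fun a => (P i a).eval y :=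
    pow_vecMul_coeff (P i) (fun a => (hdeg i a).trans_lt a.isLt) y
  refine ⟨s • Matrix.comp _ _ _ _ ℝ (diagonal M),
    (isUnit_iff_isUnit_det _).1 ((isUnit_comp_diagonal hM).smul s), fun e => ?_⟩
  rw [vecMul_smul, hypRow_eq_edgeRow, edgeRow_vecMul_comp_diagonal, neg_vecMul, vecMul_M, vecMul_M]

theorem exists_isUnit_det_bjRow_eval_eq_smul_hypRow_vecMul (t : Fin n → ℝ) (f : Fin d → ℝ[X])
    (hmonic : ∀ a, (f a).Monic) (hdeg : ∀ a, (f a).natDegree = a + 1) :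
    ∃ A : Matrix (Fin n × Fin d) (Fin n × Fin d) ℝ, IsUnit A.det ∧ ∀ e : Pair n,
      bjRow (fun i a => (f a).eval (t i)) e =
        (t e.val.2 - t e.val.1) • hypRow (fun i (a : Fin d) => t i ^ (a : ℕ)) e ᵥ* A := by
  have quotient_monic (i : Fin n) (a : Fin d) : (f a /ₘ (X - C (t i))).Monic := by
    have : (f a).degree ≠ 0 := by
      rw [degree_eq_natDegree (hmonic a).ne_zero, hdeg]
      exact_mod_cast (a : ℕ).succ_ne_zero
    rw [Monic, leadingCoeff_divByMonic_X_sub_C _ this, hmonic a]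
  have quotient_natDegree (i : Fin n) (a : Fin d) : (f a /ₘ (X - C (t i))).natDegree = a := by
    rw [natDegree_divByMonic _ (monic_X_sub_C _), hdeg, natDegree_X_sub_C, Nat.add_sub_cancel]
  obtain ⟨A, hA, hypRow_vecMul_A⟩ := exists_isUnit_det_hypRow_vecMul_eq_edgeRow_eval (-1) t
    (fun i a => f a /ₘ (X - C (t i))) quotient_monic quotient_natDegree
  refine ⟨A, hA, fun e => ?_⟩
  rw [bjRow_eq_edgeRow, hypRow_vecMul_A, smul_edgeRow, smul_edgeRow]
  congr 1 <;> ext a <;>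
    simp only [Pi.smul_apply, Pi.sub_apply, Pi.neg_apply, Units.smul_def, Units.val_neg,
      Units.val_one, smul_eq_mul]
  · linear_combination sub_mul_eval_divByMonic_X_sub_C (f a) (t e.val.1) (t e.val.2)
  · linear_combination sub_mul_eval_divByMonic_X_sub_C (f a) (t e.val.2) (t e.val.1)

theorem cvec_parabola (d : ℕ) (x y : ℝ) (a : Fin d) :
    cvec d (x, x ^ 2) (y, y ^ 2) a = (x - y) ^ (d - 1) * (x + y) ^ (a : ℕ) := by
  have exponent_split : d - 1 - (a : ℕ) + a = d - 1 := by lia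
  calc (x - y) ^ (d - 1 - (a : ℕ)) * (x ^ 2 - y ^ 2) ^ (a : ℕ)
      = (x - y) ^ (d - 1 - (a : ℕ) + a) * (x + y) ^ (a : ℕ) := by
        rw [pow_add, sq_sub_sq, mul_pow]; ring
    _ = (x - y) ^ (d - 1) * (x + y) ^ (a : ℕ) := by rw [exponent_split]

theorem exists_isUnit_det_cofRow_parabola_eq_smul_hypRow_vecMul (d : ℕ) (t : Fin n → ℝ) :
    ∃ B : Matrix (Fin n × Fin d) (Fin n × Fin d) ℝ, IsUnit B.det ∧ ∀ e : Pair n,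
      cofRow d (fun i => (t i, t i ^ 2)) e =
        (t e.val.2 - t e.val.1) ^ (d - 1) •
          hypRow (fun i (a : Fin d) => t i ^ (a : ℕ)) e ᵥ* B := by
  obtain ⟨B, hB, hypRow_vecMul_B⟩ := exists_isUnit_det_hypRow_vecMul_eq_edgeRow_eval
    ((-1) ^ (d - 1)) t (fun i (a : Fin d) => (X + C (t i)) ^ (a : ℕ))
    (fun i a => (monic_X_add_C (t i)).pow a) (fun i a => natDegree_pow_X_add_C a (t i))
  refine ⟨B, hB, fun e => ?_⟩
  have sub_pow_eq : (t e.val.1 - t e.val.2) ^ (d - 1) =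
      (t e.val.2 - t e.val.1) ^ (d - 1) * (-1) ^ (d - 1) := by
    rw [← mul_pow, mul_neg_one, neg_sub]
  rw [cofRow_eq_edgeRow, hypRow_vecMul_B, smul_edgeRow, smul_edgeRow]
  congr 1 <;> ext a <;>
    simp only [Pi.smul_apply, Pi.neg_apply, Units.smul_def, Units.val_pow_eq_pow_val,
      Units.val_neg, Units.val_one, smul_eq_mul, eval_pow, eval_add, eval_X, eval_C,
      cvec_parabola, sub_pow_eq] <;>
    ring

end PolynomialBlocks

/-- For parameters `t₁ < … < tₙ`, with `pᵢ = (1, tᵢ, …, tᵢ^{d-1})`,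
`p′ᵢ = (tᵢ, …, tᵢ^d)` and `qᵢ = (tᵢ, tᵢ²)`, the matrices `R(p′)` and `C_d(q)` are obtained from
`H(p)` by multiplying on the right by an invertible matrix and rescaling each row by a positive
scalar; in particular, the rows of the three matrices define the same oriented matroid. -/
theorem stmt9 (d n : ℕ) (hd : 1 ≤ d) (t : Fin n → ℝ) (ht : StrictMono t) :
    ∃ A B : Matrix (Fin n × Fin d) (Fin n × Fin d) ℝ,
      IsUnit A.det ∧ IsUnit B.det ∧
      ∃ α β : Pair n → ℝ, (∀ e, 0 < α e) ∧ (∀ e, 0 < β e) ∧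
        (∀ e : Pair n,
          bjRow (fun i (a : Fin d) => t i ^ ((a : ℕ) + 1)) e =
            α e • Matrix.vecMul (hypRow (fun i (a : Fin d) => t i ^ (a : ℕ)) e) A) ∧
        (∀ e : Pair n,
          cofRow d (fun i => (t i, t i ^ 2)) e =
            β e • Matrix.vecMul (hypRow (fun i (a : Fin d) => t i ^ (a : ℕ)) e) B) := by
  obtain ⟨A, hA, bjRow_eq⟩ := exists_isUnit_det_bjRow_eval_eq_smul_hypRow_vecMul t
    (fun a : Fin d => Polynomial.X ^ ((a : ℕ) + 1)) (fun _ => Polynomial.monic_X_pow _)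
    (fun _ => Polynomial.natDegree_X_pow _)
  obtain ⟨B, hB, cofRow_eq⟩ := exists_isUnit_det_cofRow_parabola_eq_smul_hypRow_vecMul d t
  have gap_pos (e : Pair n) : 0 < t e.val.2 - t e.val.1 := sub_pos.2 (ht e.property)
  refine ⟨A, B, hA, hB, fun e => t e.val.2 - t e.val.1, fun e => (t e.val.2 - t e.val.1) ^ (d - 1),
    gap_pos, fun e => pow_pos (gap_pos e) _, fun e => ?_, cofRow_eq⟩
  simpa only [Polynomial.eval_pow, Polynomial.eval_X] using bjRow_eq e
end

section
/- Let d ≥ 1 and let q₁,…,qₙ ∈ ℝ² be points in convex position. Let λ = (λ_{ij}) be a vector of coefficients, indexed by the pairs of {1,…,n}, giving a linear dependence among the rows of C_d(q₁,…,qₙ) (i.e., the corresponding linear combination of rows is zero). Fix i ∈ {1,…,n} such that λ_{ij} ≠ 0 for at least one j ≠ i. Define ε_{ij} = λ_{ij} if d is even, and, if d is odd, ε_{ij} = −λ_{ij} for j > i and ε_{ij} = λ_{ij} for j < i. Then the sequence (ε_{i,i+1}, ε_{i,i+2}, …, ε_{i,n}, ε_{i,1}, …, ε_{i,i−1}) changes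 sign at least d times, where a sign change is a pair of positions r < s in this order whose entries are nonzero and of opposite sign and all entries strictly between them are zero. -/
open scoped BigOperators

/-- The coefficient `λ_{ij}` of the unordered pair `{i,j}` (zero if `i = j`). -/
def lamPair {n : ℕ} (lam : Pair n → ℝ) (i j : Fin n) : ℝ :=
  if h : i < j then lam ⟨(i, j), h⟩ else if h' : j < i then lam ⟨(j, i), h'⟩ else 0

/-- `ε_{ij}`: equal to `λ_{ij}` for even `d`; for odd `d` equal to `-λ_{ij}` when `j > i` and to
`λ_{ij}` when `j < i`. -/
def epsSeq {n : ℕ} (d : ℕ) (lam : Pair n → ℝ) (i j : Fin n) : ℝ :=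
  if d % 2 = 1 ∧ i < j then - lamPair lam i j else lamPair lam i j

/-- The vertex at cyclic position `m` after `i`: `i + m + 1 (mod n)`. -/
def cycAfter {n : ℕ} (i : Fin n) (m : ℕ) : Fin n :=
  ⟨((i : ℕ) + m + 1) % n, Nat.mod_lt _ i.pos⟩

/-!
The vectors `q i - q j`, for `j` in cyclic order after `i`, lie in an open half-plane and turn
counterclockwise, and block `i` of the dependence says that the weights `ε_{ij}` annihilate every
binary form of degree `d - 1` on them. If there is a sign change, between the vectors `u` and `w`,
multiply the weights by the linear form `det (u + w, ·)`, which vanishes strictly between `u` and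
`w`: this removes exactly that sign change and lowers by one the degree of the annihilated forms.
If there is none, a linear form positive on all the vectors lowers the degree without creating one.
Either way induction reduces to weights annihilating the constants, i.e. nonzero weights of sum
zero, which must change sign.
-/

section SignChanges

variable {ι R : Type*} [LinearOrder ι] [CommRing R] [LinearOrder R]

/-- The sign changes of a sequence: pairs of positions whose entries are nonzero and of opposite
sign, with only zero entries strictly in between. -/
def signChanges (e : ι → R) : Set (ι × ι) :=
  {p | p.1 < p.2 ∧ e p.1 ≠ 0 ∧ e p.2 ≠ 0 ∧ e p.1 * e p.2 < 0 ∧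
    ∀ m, p.1 < m → m < p.2 → e m = 0}

variable {e g : ι → R} {p : ι × ι}

theorem le_fst_or_snd_le_of_mem_signChanges (hp : p ∈ signChanges e) {m : ι} (hm : e m ≠ 0) :
    m ≤ p.1 ∨ p.2 ≤ m := by
  by_contra! h
  exact hm (hp.2.2.2.2 m h.1 h.2)

theorem eq_of_mem_signChanges {a b : ι} (hp : p ∈ signChanges e)
    (hzero : ∀ m, a < m → m < b → e m = 0) (hap : a ≤ p.1) (hpb : p.2 ≤ b) : (a, b) = p := by
  obtain ⟨hlt, hp₁, hp₂, -, -⟩ := hp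
  refine Prod.ext (hap.eq_of_not_lt fun h ↦ ?_) (hpb.eq_of_not_lt fun h ↦ ?_).symm
  · exact hp₁ (hzero p.1 h (hlt.trans_le hpb))
  · exact hp₂ (hzero p.2 (hap.trans_lt hlt) h)

variable [IsStrictOrderedRing R]

theorem signChanges_mul_of_pos (hg : ∀ m, 0 < g m) : signChanges (e * g) = signChanges e := by
  ext ⟨a, b⟩
  have hsign : e a * g a * (e b * g b) < 0 ↔ e a * e b < 0 := by
    have hgab : 0 < g a * g b := mul_pos (hg a) (hg b)
    rw [mul_mul_mul_comm]
    exact ⟨fun h ↦ neg_of_mul_neg_left h hgab.le, fun h ↦ mul_neg_of_neg_of_pos h hgab⟩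
  simp only [signChanges, Set.mem_ofPred_eq, Pi.mul_apply, hsign, mul_eq_zero, (hg _).ne', or_false,
    ne_eq]

theorem mul_mul_neg_iff_of_separator (hp : p ∈ signChanges e)
    (hneg : ∀ m ≤ p.1, g m < 0) (hpos : ∀ m, p.2 ≤ m → 0 < g m) {a b : ι} (hab : a < b)
    (ha : e a ≠ 0) (hb : e b ≠ 0) (hzero : ∀ m, a < m → m < b → e m = 0) :
    e a * e b * (g a * g b) < 0 ↔ e a * e b < 0 ∧ (a, b) ≠ p := by
  have of_pos (hg : 0 < g a * g b) (hne : (a, b) ≠ p) :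
      e a * e b * (g a * g b) < 0 ↔ e a * e b < 0 ∧ (a, b) ≠ p :=
    ⟨fun h ↦ ⟨neg_of_mul_neg_left h hg.le, hne⟩, fun h ↦ mul_neg_of_neg_of_pos h.1 hg⟩
  rcases le_fst_or_snd_le_of_mem_signChanges hp ha with hap | hpa
  · rcases le_fst_or_snd_le_of_mem_signChanges hp hb with hbp | hpb
    · refine of_pos (mul_pos_of_neg_of_neg (hneg a hap) (hneg b hbp)) ?_
      rintro rfl
      exact hbp.not_gt hp.1
    · obtain rfl : (a, b) = p := eq_of_mem_signChanges hp hzero hap hpb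
      have hgab : g a * g b < 0 := mul_neg_of_neg_of_pos (hneg a le_rfl) (hpos b le_rfl)
      simp [(mul_pos_of_neg_of_neg hp.2.2.2.1 hgab).le]
  · refine of_pos (mul_pos (hpos a hpa) (hpos b (hpa.trans hab.le))) ?_
    rintro rfl
    exact hpa.not_gt hp.1

theorem signChanges_mul_of_separator (hp : p ∈ signChanges e)
    (hneg : ∀ m ≤ p.1, g m < 0) (hpos : ∀ m, p.2 ≤ m → 0 < g m) :
    signChanges (e * g) = signChanges e \ {p} := by
  have hsupp (m : ι) : e m * g m = 0 ↔ e m = 0 := by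
    refine ⟨fun h ↦ ?_, fun h ↦ by rw [h, zero_mul]⟩
    by_contra hm
    have hgm : g m ≠ 0 := (le_fst_or_snd_le_of_mem_signChanges hp hm).elim
      (fun h ↦ (hneg m h).ne) (fun h ↦ (hpos m h).ne')
    exact mul_ne_zero hm hgm h
  ext ⟨a, b⟩
  simp only [signChanges, Set.mem_ofPred_eq, Pi.mul_apply, Set.mem_sdiff, Set.mem_singleton_iff,
    ne_eq, hsupp, mul_mul_mul_comm (e a)]
  constructor
  · rintro ⟨hab, ha, hb, hlt, hzero⟩
    obtain ⟨hlt, hne⟩ := (mul_mul_neg_iff_of_separator hp hneg hpos hab ha hb hzero).mp hlt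
    exact ⟨⟨hab, ha, hb, hlt, hzero⟩, hne⟩
  · rintro ⟨⟨hab, ha, hb, hlt, hzero⟩, hne⟩
    exact ⟨hab, ha, hb,
      (mul_mul_neg_iff_of_separator hp hneg hpos hab ha hb hzero).mpr ⟨hlt, hne⟩, hzero⟩

theorem signChanges_nonempty_of_lt_of_mul_neg [Finite ι] {a b : ι} (hlt : a < b)
    (hab : e a * e b < 0) : (signChanges e).Nonempty := by
  obtain ⟨s, ⟨has, hes⟩, hs_min⟩ :=
    (Set.toFinite {m | a < m ∧ e a * e m < 0}).exists_minimal ⟨b, hlt, hab⟩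
  obtain ⟨r, ⟨hrs, her⟩, hr_max⟩ :=
    (Set.toFinite {m | m < s ∧ e m ≠ 0}).exists_maximal ⟨a, has, left_ne_zero_of_mul hes.ne⟩
  have hzero (m : ι) (hrm : r < m) (hms : m < s) : e m = 0 := by
    by_contra hm
    exact hrm.not_ge (hr_max ⟨hms, hm⟩ hrm.le)
  have har : a ≤ r := by
    by_contra! hra
    exact left_ne_zero_of_mul hes.ne (hzero a hra has)
  have hear : 0 < e a * e r := by
    refine lt_of_le_of_ne ?_ (mul_ne_zero (left_ne_zero_of_mul hes.ne) her).symm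
    rcases har.eq_or_lt with rfl | hlt
    · exact mul_self_nonneg _
    · by_contra! hneg
      exact hrs.not_ge (hs_min ⟨hlt, hneg⟩ hrs.le)
  have hers : e r * e s < 0 := by
    have : e a * e r * (e a * e s) = e a * e a * (e r * e s) := by ring
    exact neg_of_mul_neg_right (this ▸ mul_neg_of_pos_of_neg hear hes) (mul_self_nonneg _)
  exact ⟨(r, s), hrs, her, right_ne_zero_of_mul hes.ne, hers, hzero⟩

theorem signChanges_nonempty_of_mul_neg [Finite ι] {a b : ι} (hab : e a * e b < 0) :
    (signChanges e).Nonempty := by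
  rcases lt_trichotomy a b with hlt | rfl | hgt
  · exact signChanges_nonempty_of_lt_of_mul_neg hlt hab
  · exact absurd hab (mul_self_nonneg _).not_gt
  · exact signChanges_nonempty_of_lt_of_mul_neg hgt (mul_comm (e a) _ ▸ hab)

theorem signChanges_nonempty_of_sum_eq_zero [Fintype ι] (hsum : ∑ m, e m = 0) (he : e ≠ 0) :
    (signChanges e).Nonempty := by
  obtain ⟨m, hm⟩ := Function.ne_iff.mp he
  obtain ⟨a, -, ha⟩ := Finset.exists_pos_of_sum_zero_of_exists_nonzero e hsum ⟨m, by simp, hm⟩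
  obtain ⟨b, -, hb⟩ := Finset.exists_pos_of_sum_zero_of_exists_nonzero (-e) (by simpa using hsum)
    ⟨m, by simp, neg_ne_zero.mpr hm⟩
  exact signChanges_nonempty_of_mul_neg (mul_neg_of_pos_of_neg ha (neg_pos.mp hb))

end SignChanges

theorem det2_self (u : ℝ × ℝ) : det2 u u = 0 := by
  simp only [det2]; ring

theorem det2_add_left (u w v : ℝ × ℝ) : det2 (u + w) v = det2 u v + det2 w v := by
  simp only [det2, Prod.fst_add, Prod.snd_add]; ring

theorem det2_sub_left (u w v : ℝ × ℝ) : det2 (u - w) v = det2 u v - det2 w v := by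
  simp only [det2, Prod.fst_sub, Prod.snd_sub]; ring

theorem det2_swap (u v : ℝ × ℝ) : det2 v u = -det2 u v := by
  simp only [det2]; ring

theorem det2_sub_sub (x y z : ℝ × ℝ) : det2 (x - y) (x - z) = det2 (y - x) (z - x) := by
  simp only [det2, Prod.fst_sub, Prod.snd_sub]; ring

theorem det2_sub_rotate (x y z : ℝ × ℝ) : det2 (y - x) (z - x) = det2 (x - z) (y - z) := by
  simp only [det2, Prod.fst_sub, Prod.snd_sub]; ring

section Forms

variable {ι : Type*}

/-- The weights `e` on the plane vectors `v` annihilate every binary form of degree `D`. It suffices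
to say this for the monomials `x ^ a * y ^ b` with `a + b = D`. -/
def AnnihilatesForms [Fintype ι] (D : ℕ) (v : ι → ℝ × ℝ) (e : ι → ℝ) : Prop :=
  ∀ a b : ℕ, a + b = D → ∑ m, e m * ((v m).1 ^ a * (v m).2 ^ b) = 0

theorem AnnihilatesForms.mul_det2 [Fintype ι] {D : ℕ} {v : ι → ℝ × ℝ} {e : ι → ℝ}
    (h : AnnihilatesForms (D + 1) v e) (u : ℝ × ℝ) :
    AnnihilatesForms D v (e * fun m ↦ det2 u (v m)) := by
  intro a b hab
  calc ∑ m, e m * det2 u (v m) * ((v m).1 ^ a * (v m).2 ^ b)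
      = u.1 * ∑ m, e m * ((v m).1 ^ a * (v m).2 ^ (b + 1)) -
          u.2 * ∑ m, e m * ((v m).1 ^ (a + 1) * (v m).2 ^ b) := by
        simp only [Finset.mul_sum, ← Finset.sum_sub_distrib, det2]
        exact Finset.sum_congr rfl fun m _ ↦ by ring
    _ = 0 := by
        rw [h a (b + 1) (by omega), h (a + 1) b (by omega), mul_zero, mul_zero, sub_zero]

variable [LinearOrder ι]

/-- The plane vectors `v` are nonzero and turn counterclockwise inside an open half-plane. -/
structure IsCounterclockwise (v : ι → ℝ × ℝ) : Prop where
  ne_zero : ∀ m, v m ≠ 0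
  det2_pos : ∀ r s, r < s → 0 < det2 (v r) (v s)

namespace IsCounterclockwise

variable {v : ι → ℝ × ℝ}

theorem det2_nonneg (hv : IsCounterclockwise v) {r s : ι} (hrs : r ≤ s) :
    0 ≤ det2 (v r) (v s) := by
  rcases hrs.eq_or_lt with rfl | hlt
  · exact (det2_self _).ge
  · exact (hv.det2_pos r s hlt).le

theorem det2_add_neg (hv : IsCounterclockwise v) {r s m : ι} (hrs : r < s) (hm : m ≤ r) :
    det2 (v r + v s) (v m) < 0 := by
  rw [det2_add_left, det2_swap (v m), det2_swap (v m)]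
  linarith [hv.det2_nonneg hm, hv.det2_pos m s (hm.trans_lt hrs)]

theorem det2_add_pos (hv : IsCounterclockwise v) {r s m : ι} (hrs : r < s) (hm : s ≤ m) :
    0 < det2 (v r + v s) (v m) := by
  rw [det2_add_left]
  linarith [hv.det2_nonneg hm, hv.det2_pos r m (hrs.trans_le hm)]

theorem exists_det2_pos [Finite ι] (hv : IsCounterclockwise v) :
    ∃ u : ℝ × ℝ, ∀ m, 0 < det2 u (v m) := by
  cases isEmpty_or_nonempty ι
  · exact ⟨0, isEmptyElim⟩
  obtain ⟨bot, hbot : ∀ m, bot ≤ m⟩ := Finite.exists_min (id : ι → ι)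
  obtain ⟨top, htop : ∀ m, m ≤ top⟩ := Finite.exists_max (id : ι → ι)
  rcases (hbot top).eq_or_lt with heq | hlt
  · refine ⟨((v bot).2, -(v bot).1), fun m ↦ ?_⟩
    obtain rfl : m = bot := le_antisymm (heq ▸ htop m) (hbot m)
    have hm : (v m).1 ≠ 0 ∨ (v m).2 ≠ 0 := by
      by_contra! h
      exact hv.ne_zero m (Prod.ext h.1 h.2)
    have hsq : 0 < (v m).2 ^ 2 + (v m).1 ^ 2 := by rcases hm with hm | hm <;> positivity
    rw [det2]
    linarith
  · refine ⟨v bot - v top, fun m ↦ ?_⟩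
    rw [det2_sub_left, det2_swap (v m) (v top)]
    rcases (hbot m).eq_or_lt with rfl | hm
    · linarith [hv.det2_nonneg (hbot bot), hv.det2_pos bot top hlt]
    · linarith [hv.det2_pos bot m hm, hv.det2_nonneg (htop m)]

theorem lt_ncard_signChanges [Fintype ι] (hv : IsCounterclockwise v) {D : ℕ} {e : ι → ℝ}
    (h : AnnihilatesForms D v e) (he : e ≠ 0) : D < (signChanges e).ncard := by
  induction D generalizing e with
  | zero =>
    have hsum : ∑ m, e m = 0 := by simpa using h 0 0 rfl
    exact (Set.ncard_pos).mpr (signChanges_nonempty_of_sum_eq_zero hsum he)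
  | succ D ih =>
    rcases (signChanges e).eq_empty_or_nonempty with hempty | ⟨p, hp⟩
    · obtain ⟨u, hu⟩ := hv.exists_det2_pos
      obtain ⟨m, hm⟩ := Function.ne_iff.mp he
      have hlt := ih (h.mul_det2 u) (Function.ne_iff.mpr ⟨m, mul_ne_zero hm (hu m).ne'⟩)
      rw [signChanges_mul_of_pos hu, hempty, Set.ncard_empty] at hlt
      exact absurd hlt D.not_lt_zero
    · have hneg : ∀ m ≤ p.1, det2 (v p.1 + v p.2) (v m) < 0 := fun _ ↦ hv.det2_add_neg hp.1
      have hpos : ∀ m, p.2 ≤ m → 0 < det2 (v p.1 + v p.2) (v m) := fun _ ↦ hv.det2_add_pos hp.1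
      have hlt := ih (h.mul_det2 (v p.1 + v p.2))
        (Function.ne_iff.mpr ⟨p.1, mul_ne_zero hp.2.1 (hneg p.1 le_rfl).ne⟩)
      rw [signChanges_mul_of_separator hp hneg hpos] at hlt
      rw [← Set.ncard_sdiff_singleton_add_one hp]
      exact Nat.succ_lt_succ hlt

end IsCounterclockwise

end Forms

section CycAfter

variable {n : ℕ} (i : Fin n)

theorem cycAfter_val (m : Fin (n - 1)) :
    (cycAfter i m : ℕ) = if (i : ℕ) + m + 1 < n then (i : ℕ) + m + 1 else i + m + 1 - n := by
  have := i.isLt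
  have := m.isLt
  split_ifs with h
  · exact Nat.mod_eq_of_lt h
  · exact (Nat.mod_eq_sub_mod (by omega)).trans (Nat.mod_eq_of_lt (by omega))

theorem cycAfter_ne (m : Fin (n - 1)) : cycAfter i m ≠ i := by
  rw [Ne, Fin.ext_iff, cycAfter_val]
  split_ifs <;> omega

theorem cycAfter_injective : Function.Injective fun m : Fin (n - 1) ↦ cycAfter i m := by
  intro a b h
  have h := congrArg Fin.val h
  simp only [cycAfter_val] at h
  split_ifs at h <;> omega

theorem exists_cycAfter_eq {j : Fin n} (hj : j ≠ i) : ∃ m : Fin (n - 1), cycAfter i m = j := by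
  rcases hj.lt_or_gt with h | h
  · refine ⟨⟨j + n - i - 1, by omega⟩, Fin.ext ?_⟩
    rw [cycAfter_val]; dsimp only; split_ifs <;> omega
  · refine ⟨⟨j - i - 1, by omega⟩, Fin.ext ?_⟩
    rw [cycAfter_val]; dsimp only; split_ifs <;> omega

theorem sum_cycAfter {M : Type*} [AddCommMonoid M] (f : Fin n → M) (hf : f i = 0) :
    ∑ m : Fin (n - 1), f (cycAfter i m) = ∑ j, f j := by
  refine Finset.sum_of_injOn (fun m : Fin (n - 1) ↦ cycAfter i m) (cycAfter_injective i).injOn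
    (fun _ _ ↦ Finset.mem_coe.mpr (Finset.mem_univ _)) (fun j _ hj ↦ ?_) fun _ _ ↦ rfl
  obtain rfl : j = i := by
    by_contra hne
    obtain ⟨m, hm⟩ := exists_cycAfter_eq i hne
    exact hj ⟨m, by simp, hm⟩
  exact hf

theorem ConvexPosition.isCounterclockwise {q : Fin n → ℝ × ℝ} (hq : ConvexPosition q) :
    IsCounterclockwise fun m : Fin (n - 1) ↦ q i - q (cycAfter i m) where
  ne_zero m h := cycAfter_ne i m (hq.1 (sub_eq_zero.mp h)).symm
  det2_pos r s hrs := by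
    have hr := cycAfter_val i r
    have hs := cycAfter_val i s
    have := Fin.lt_def.mp hrs
    rw [det2_sub_sub]
    split_ifs at hr hs
    · exact hq.2 i _ _ (by omega) (by omega)
    · rw [det2_sub_rotate]
      exact hq.2 _ i _ (by omega) (by omega)
    · omega
    · rw [← det2_sub_rotate]
      exact hq.2 _ _ i (by omega) (by omega)

end CycAfter

section CofactorMatrix

variable {n d : ℕ} (q : Fin n → ℝ × ℝ) (lam : Pair n → ℝ) (i : Fin n)

theorem neg_cvec_swap (u w : ℝ × ℝ) (a : Fin d) :
    -cvec d w u a = (-1) ^ d * cvec d u w a := by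
  have hd : (-1 : ℝ) ^ d = -1 * ((-1) ^ (d - 1 - (a : ℕ)) * (-1) ^ (a : ℕ)) := by
    rw [← pow_add, Nat.sub_add_cancel (by omega), mul_pow_sub_one a.pos.ne']
  rw [cvec, ← neg_sub u.1, ← neg_sub u.2, neg_pow, neg_pow (u.2 - w.2), hd, cvec]
  ring

theorem sum_pair_eq_sum_incident {M : Type*} [AddCommMonoid M] (f : Pair n → M)
    (hf : ∀ e : Pair n, e.val.1 ≠ i → e.val.2 ≠ i → f e = 0) :
    ∑ e, f e = ∑ j, if h : i < j then f ⟨(i, j), h⟩ else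
      if h : j < i then f ⟨(j, i), h⟩ else 0 := by
  rw [← Finset.sum_filter_of_ne (p := fun e : Pair n ↦ e.val.1 = i ∨ e.val.2 = i)
    fun e _ he ↦ by_contra fun h ↦ he (hf e (not_or.mp h).1 (not_or.mp h).2)]
  refine Finset.sum_of_injOn (fun e ↦ if e.val.1 = i then e.val.2 else e.val.1) ?_ ?_ ?_ ?_
  · rintro ⟨⟨x₁, y₁⟩, hxy₁⟩ he₁ ⟨⟨x₂, y₂⟩, hxy₂⟩ he₂ h
    grind
  · simp
  · intro j _ hj
    have hij : ¬i < j := fun h ↦ hj ⟨⟨(i, j), h⟩, by simp, by simp⟩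
    have hji : ¬j < i := fun h ↦ hj ⟨⟨(j, i), h⟩, by simp, by simp [h.ne]⟩
    rw [dif_neg hij, dif_neg hji]
  · rintro ⟨⟨x, y⟩, hxy⟩ he
    grind

theorem epsSeq_self : epsSeq d lam i i = 0 := by
  simp [epsSeq, lamPair]

theorem epsSeq_of_lt {i j : Fin n} (h : i < j) :
    epsSeq d lam i j = (-1) ^ d * lam ⟨(i, j), h⟩ := by
  rcases d.even_or_odd with hd | hd
  · simp [epsSeq, lamPair, h, Nat.even_iff.mp hd, hd.neg_one_pow]
  · simp [epsSeq, lamPair, h, Nat.odd_iff.mp hd, hd.neg_one_pow]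

theorem epsSeq_of_gt {i j : Fin n} (h : j < i) : epsSeq d lam i j = lam ⟨(j, i), h⟩ := by
  simp [epsSeq, lamPair, h, h.not_gt]

theorem epsSeq_ne_zero {i j : Fin n} (h : lamPair lam i j ≠ 0) : epsSeq d lam i j ≠ 0 := by
  rw [epsSeq]
  split_ifs
  exacts [neg_ne_zero.mpr h, h]

theorem sum_smul_cofRow_apply (a : Fin d) :
    (∑ e, lam e • cofRow d q e) (i, a) =
      (-1) ^ d * ∑ j, epsSeq d lam i j * cvec d (q i) (q j) a := by
  simp only [Finset.sum_apply, Pi.smul_apply, smul_eq_mul]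
  rw [sum_pair_eq_sum_incident i _ fun e h₁ h₂ ↦ by simp [cofRow, h₁.symm, h₂.symm], Finset.mul_sum]
  refine Finset.sum_congr rfl fun j _ ↦ ?_
  rcases lt_trichotomy i j with hij | rfl | hji
  · have hsq : (-1 : ℝ) ^ d * (-1) ^ d = 1 := by rw [← mul_pow]; simp
    simp only [hij, dif_pos, epsSeq_of_lt lam hij, cofRow, if_true]
    linear_combination -(lam ⟨(i, j), hij⟩ * cvec d (q i) (q j) a) * hsq
  · simp [epsSeq_self]
  · simp only [hji, hji.not_gt, dif_pos, dif_neg, not_false_eq_true, epsSeq_of_gt lam hji, cofRow,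
      hji.ne', if_true, if_false, neg_cvec_swap (q i)]
    ring

theorem annihilatesForms_epsSeq
    (hdep : ∀ a, (∑ e, lam e • cofRow (d + 1) q e) (i, a) = 0) :
    AnnihilatesForms d (fun m : Fin (n - 1) ↦ q i - q (cycAfter i m))
      (fun m ↦ epsSeq (d + 1) lam i (cycAfter i m)) := by
  intro a b hab
  have hsum := hdep ⟨b, by omega⟩
  rw [sum_smul_cofRow_apply, mul_eq_zero_iff_left (pow_ne_zero _ (by norm_num)),
    ← sum_cycAfter i _ (by rw [epsSeq_self, zero_mul])] at hsum
  simpa only [cvec, Prod.fst_sub, Prod.snd_sub, show d + 1 - 1 - b = a by omega] using hsum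

theorem stmt12_general
    (hv : IsCounterclockwise fun m : Fin (n - 1) ↦ q i - q (cycAfter i m))
    (hdep : ∀ a, (∑ e, lam e • cofRow d q e) (i, a) = 0)
    (hnz : ∃ j, j ≠ i ∧ lamPair lam i j ≠ 0) :
    d ≤ (signChanges fun m : Fin (n - 1) ↦ epsSeq d lam i (cycAfter i m)).ncard := by
  obtain ⟨j, hji, hj⟩ := hnz
  obtain ⟨m, rfl⟩ := exists_cycAfter_eq i hji
  cases d with
  | zero => exact Nat.zero_le _
  | succ D =>
    exact hv.lt_ncard_signChanges (annihilatesForms_epsSeq q lam i hdep)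
      (Function.ne_iff.mpr ⟨m, epsSeq_ne_zero lam hj⟩)

end CofactorMatrix

/-- Let `q₁,…,qₙ` be in convex position and `λ` a linear dependence among the
rows of `C_d(q)`.  If `λ_{ij} ≠ 0` for some `j ≠ i`, then the cyclic sequence
`(ε_{i,i+1},…,ε_{i,i-1})` has at least `d` sign changes, where a sign change is a pair of
positions `r < s` with nonzero entries of opposite sign and only zero entries strictly in
between. -/
theorem stmt12 (d n : ℕ) (hd : 1 ≤ d) (q : Fin n → ℝ × ℝ) (hq : ConvexPosition q)
    (lam : Pair n → ℝ)
    (hdep : ∑ e : Pair n, lam e • cofRow d q e = 0)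
    (i : Fin n) (hnz : ∃ j : Fin n, j ≠ i ∧ lamPair lam i j ≠ 0) :
    d ≤ Set.ncard {p : Fin (n - 1) × Fin (n - 1) |
      p.1 < p.2 ∧
      epsSeq d lam i (cycAfter i p.1.val) ≠ 0 ∧
      epsSeq d lam i (cycAfter i p.2.val) ≠ 0 ∧
      epsSeq d lam i (cycAfter i p.1.val) * epsSeq d lam i (cycAfter i p.2.val) < 0 ∧
      ∀ m : Fin (n - 1), p.1 < m → m < p.2 → epsSeq d lam i (cycAfter i m.val) = 0} := by
  exact stmt12_general q lam i (hq.isCounterclockwise i) (fun a ↦ congrFun hdep (i, a)) hnz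
end
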